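/- There exist a constant c > 0 and a real number X₀ such that for all real X ≥ X₀, the number of negative squarefree integers d such that the absolute value of the discriminant of the imaginary quadratic field ℚ(√d) is at most X and the ideal class group Cl(ℚ(√d)) contains a subgroup isomorphic to (ℤ/7ℤ)² is at least c · X^(1/4). -/

import Mathlib

open NumberField

/-- `d` is a negative squarefree integer such that the imaginary quadratic field
`ℚ(√d)` (characterized as a degree-2 number field containing a square root of `d`)
has `|discriminant| ≤ X` and its ideal class group contains a subgroup isomorphic
to `(ℤ/7ℤ)²`. -/
def GoodRank7sq (X : ℝ) (d : ℤ) : Prop :=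
  d < 0 ∧ Squarefree d ∧
  ∀ (K : Type) [Field K] [NumberField K],
    (∃ x : K, x * x = (d : K)) → Module.finrank ℚ K = 2 →
      (|NumberField.discr K| : ℝ) ≤ X ∧
      ∃ f : Multiplicative (ZMod 7 × ZMod 7) →* ClassGroup (𝓞 K), Function.Injective f

/-!
An integral point `P` at which `F` is negative gives, in the field `ℚ(√(F P))`, two elements whose
norms are seventh powers of squares, and hence two independent ideal classes of order seven. As `F`
has degree `8`, a box of side `L ≍ X ^ (1 / 8)` contains `≍ X ^ (1 / 4)` admissible points with
`-F P ≪ X`; it remains to bound how often the same field occurs.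

Write `-F P = a * b ^ 2` with `a` squarefree. For a positive proportion of the points, the part of
`a` composed of primes `> z` exceeds `1012 * L ^ 2`, where `z` is a fixed small power of `L`. Such
an `a` has a bounded number of prime factors `> z`, each of which restricts the ratio of the
coordinates of `P` to at most `8` residues. Two points with the same residues have a determinant
divisible by the rough part of `a`, hence equal to zero, so that boundedly many points share `a`.
-/

section QuadraticField

theorem exists_intCast_eq_of_squarefree_mul_sq {d n : ℤ} (hsq : Squarefree d) {q : ℚ}
    (h : (d : ℚ) * q ^ 2 = n) : ∃ m : ℤ, (m : ℚ) = q := by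
  have hdq : ((d : ℚ) * q) ^ 2 = ((d * n : ℤ) : ℚ) := by push_cast; rw [← h]; ring
  obtain ⟨k, hk⟩ : ∃ k : ℤ, (k : ℚ) = d * q :=
    IsIntegrallyClosed.exists_algebraMap_eq_of_isIntegral_pow two_pos
      (hdq ▸ isIntegral_algebraMap)
  have hk2 : k ^ 2 = d * n := by rw [← hk] at hdq; exact_mod_cast hdq
  obtain ⟨m, rfl⟩ := (hsq.dvd_pow_iff_dvd two_ne_zero).mp (Dvd.intro n hk2.symm)
  refine ⟨m, mul_left_cancel₀ (Int.cast_ne_zero.mpr hsq.ne_zero) ?_⟩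
  rw [← hk, Int.cast_mul]

variable {K : Type*} [Field K] [NumberField K] {d : ℤ} {x : K}

theorem linearIndependent_one_sqrt (hd : ¬IsSquare d) (hx : x * x = d) :
    LinearIndependent ℚ ![1, x] := by
  rw [LinearIndependent.pair_iff' one_ne_zero]
  rintro q rfl
  rw [Algebra.smul_def, mul_one, eq_ratCast] at hx
  exact hd (Rat.isSquare_intCast_iff.mp ⟨q, by exact_mod_cast hx.symm⟩)

theorem exists_basis_one_sqrt (hd : ¬IsSquare d) (hx : x * x = d)
    (hK : Module.finrank ℚ K = 2) : ∃ b : Module.Basis (Fin 2) ℚ K, ⇑b = ![1, x] :=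
  ⟨basisOfLinearIndependentOfCardEqFinrank (linearIndependent_one_sqrt hd hx) (by simp [hK]),
    by simp⟩

theorem leftMulMatrix_add_mul_sqrt (hx : x * x = d) {b : Module.Basis (Fin 2) ℚ K}
    (hb : ⇑b = ![1, x]) (p q : ℚ) :
    Algebra.leftMulMatrix b (p + q * x) = !![p, q * d; q, p] := by
  have hb0 : b 0 = 1 := by simp [hb]
  have hb1 : b 1 = x := by simp [hb]
  have h0 : (p + q * x) * b 0 = p • b 0 + q • b 1 := by
    simp only [hb0, hb1, Algebra.smul_def, eq_ratCast, mul_one]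
  have h1 : (p + q * x) * b 1 = (q * d) • b 0 + p • b 1 := by
    simp only [hb0, hb1, Algebra.smul_def, eq_ratCast, mul_one]
    push_cast
    linear_combination (q : K) * hx
  ext i j
  rw [Algebra.leftMulMatrix_eq_repr_mul]
  fin_cases j
  · simp only [Fin.zero_eta, h0]
    fin_cases i <;> simp
  · simp only [Fin.mk_one, h1]
    fin_cases i <;> simp

theorem trace_add_mul_sqrt (hd : ¬IsSquare d) (hx : x * x = d) (hK : Module.finrank ℚ K = 2)
    (p q : ℚ) : Algebra.trace ℚ K (p + q * x) = 2 * p := by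
  obtain ⟨b, hb⟩ := exists_basis_one_sqrt hd hx hK
  rw [Algebra.trace_eq_matrix_trace b, leftMulMatrix_add_mul_sqrt hx hb, Matrix.trace_fin_two_of,
    two_mul]

theorem norm_add_mul_sqrt (hd : ¬IsSquare d) (hx : x * x = d) (hK : Module.finrank ℚ K = 2)
    (p q : ℚ) : Algebra.norm ℚ (p + q * x) = p ^ 2 - d * q ^ 2 := by
  obtain ⟨b, hb⟩ := exists_basis_one_sqrt hd hx hK
  rw [Algebra.norm_eq_matrix_det b, leftMulMatrix_add_mul_sqrt hx hb, Matrix.det_fin_two_of]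
  ring

theorem exists_eq_add_mul_sqrt (hd : ¬IsSquare d) (hx : x * x = d)
    (hK : Module.finrank ℚ K = 2) (y : K) : ∃ p q : ℚ, y = p + q * x := by
  obtain ⟨b, hb⟩ := exists_basis_one_sqrt hd hx hK
  refine ⟨b.repr y 0, b.repr y 1, ?_⟩
  conv_lhs => rw [← b.sum_repr y]
  simp [Fin.sum_univ_two, hb, Algebra.smul_def]

theorem exists_two_mul_eq_add_mul_sqrt (hd : ¬IsSquare d) (hsq : Squarefree d)
    (hx : x * x = d) (hK : Module.finrank ℚ K = 2) {y : K} (hy : IsIntegral ℤ y) :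
    ∃ a b : ℤ, 2 * y = a + b * x := by
  obtain ⟨p, q, rfl⟩ := exists_eq_add_mul_sqrt hd hx hK y
  obtain ⟨a, ha⟩ := IsIntegrallyClosed.isIntegral_iff.mp (Algebra.isIntegral_trace (L := ℚ) hy)
  obtain ⟨n, hn⟩ := IsIntegrallyClosed.isIntegral_iff.mp (Algebra.isIntegral_norm ℚ hy)
  rw [trace_add_mul_sqrt hd hx hK, algebraMap_int_eq, eq_intCast] at ha
  rw [norm_add_mul_sqrt hd hx hK, algebraMap_int_eq, eq_intCast] at hn
  obtain ⟨b, hb⟩ := exists_intCast_eq_of_squarefree_mul_sq (n := a ^ 2 - 4 * n) hsq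
    (q := 2 * q) (by push_cast; rw [ha, hn]; ring)
  have ha' : (2 : K) * p = a := by exact_mod_cast ha.symm
  have hb' : (2 : K) * q = b := by exact_mod_cast hb.symm
  exact ⟨a, b, by linear_combination ha' + x * hb'⟩

theorem units_eq_one_or_neg_one (hd : d < -4) (hsq : Squarefree d) (hx : x * x = d)
    (hK : Module.finrank ℚ K = 2) (y : (𝓞 K)ˣ) : y = 1 ∨ y = -1 := by
  have hd0 : ¬IsSquare d := fun h ↦ by linarith [h.nonneg]
  obtain ⟨a, b, hab⟩ :=
    exists_two_mul_eq_add_mul_sqrt hd0 hsq hx hK (RingOfIntegers.isIntegral_coe (y : 𝓞 K))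
  have hy : ((y : 𝓞 K) : K) = ((a / 2 : ℚ) : K) + ((b / 2 : ℚ) : K) * x := by
    push_cast
    linear_combination hab / 2
  have hnorm : a ^ 2 - d * b ^ 2 = 4 := by
    have hn := NumberField.isUnit_iff_norm (x := (y : 𝓞 K)) |>.mp y.isUnit
    have hdq : (d : ℚ) < -4 := by exact_mod_cast hd
    rw [RingOfIntegers.coe_norm, hy, norm_add_mul_sqrt hd0 hx hK, abs_of_nonneg (by
      nlinarith [sq_nonneg ((a : ℚ) / 2), sq_nonneg ((b : ℚ) / 2)])] at hn
    have : (a : ℚ) ^ 2 - d * b ^ 2 = 4 := by linear_combination 4 * hn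
    exact_mod_cast this
  obtain rfl : b = 0 := by
    by_contra hb
    nlinarith [sq_nonneg a, sq_pos_of_ne_zero hb]
  rcases sq_eq_sq_iff_eq_or_eq_neg.mp (show a ^ 2 = 2 ^ 2 by linear_combination hnorm) with
    rfl | rfl
  · left
    ext
    simp [hy]
  · right
    ext
    simp [hy]

theorem discr_one_sqrt (hd : ¬IsSquare d) (hx : x * x = d) (hK : Module.finrank ℚ K = 2) :
    Algebra.discr ℚ ![1, x] = 4 * d := by
  have htr1 : Algebra.trace ℚ K 1 = 2 := by simpa using trace_add_mul_sqrt hd hx hK 1 0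
  have htrx : Algebra.trace ℚ K x = 0 := by simpa using trace_add_mul_sqrt hd hx hK 0 1
  have htrd : Algebra.trace ℚ K d = 2 * d := by simpa using trace_add_mul_sqrt hd hx hK d 0
  simp only [Algebra.discr_def, Matrix.det_fin_two, Algebra.traceMatrix_apply,
    Algebra.traceForm_apply, Matrix.cons_val_zero, Matrix.cons_val_one, mul_one, one_mul, hx,
    htr1, htrx, htrd]
  ring

theorem exists_four_mul_eq_sq_mul_discr (hd : ¬IsSquare d) (hx : x * x = d)
    (hK : Module.finrank ℚ K = 2) : ∃ m : ℤ, 4 * d = m ^ 2 * discr K := by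
  have hxint : IsIntegral ℤ x := .of_pow two_pos (by
    rw [sq, hx]
    exact isIntegral_algebraMap (R := ℤ) (x := d))
  let y : Fin 2 → 𝓞 K := ![1, ⟨x, hxint⟩]
  let b : Module.Basis (Fin 2) ℤ (𝓞 K) :=
    Module.finBasisOfFinrankEq ℤ (𝓞 K) (by rw [RingOfIntegers.rank, hK])
  have hy : Algebra.discr ℤ y = (b.toMatrix y).det ^ 2 * discr K := by
    rw [← discr_eq_discr K b, ← Algebra.discr_of_matrix_vecMul, Module.Basis.toMatrix_map_vecMul]
  have hyd : (Algebra.discr ℤ y : ℚ) = Algebra.discr ℚ ![1, x] := by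
    rw [Algebra.discr_def, Algebra.discr_def, ← eq_intCast (Int.castRingHom ℚ), RingHom.map_det]
    congr 1
    have hyx (i : Fin 2) : (y i : K) = ![1, x] i := by fin_cases i <;> rfl
    ext i j
    simp only [RingHom.mapMatrix_apply, Matrix.map_apply, Algebra.traceMatrix_apply,
      Algebra.traceForm_apply, eq_intCast, Algebra.coe_trace_int, map_mul, hyx]
  refine ⟨(b.toMatrix y).det, ?_⟩
  rw [discr_one_sqrt hd hx hK, hy] at hyd
  exact_mod_cast hyd.symm

theorem abs_discr_bounds (hd : ¬IsSquare d) (hsq : Squarefree d) (hx : x * x = d)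
    (hK : Module.finrank ℚ K = 2) : |d| ≤ |discr K| ∧ |discr K| ≤ 4 * |d| := by
  obtain ⟨m, hm⟩ := exists_four_mul_eq_sq_mul_discr hd hx hK
  have hm0 : m ≠ 0 := by
    rintro rfl
    exact hsq.ne_zero (by linarith)
  have habs : 4 * |d| = m ^ 2 * |discr K| := by
    simpa [abs_mul] using congrArg abs hm
  have hm4 : m ^ 2 ≤ 2 ^ 2 := by
    rcases Int.even_or_odd' m with ⟨k, rfl | rfl⟩
    · have hk : k * k ∣ d := ⟨discr K, by linarith⟩
      rcases Int.isUnit_iff.mp (hsq k hk) with rfl | rfl <;> norm_num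
    · have hcop : IsCoprime ((2 * k + 1) * (2 * k + 1)) 4 :=
        ⟨1, -(k ^ 2 + k), by ring⟩
      have hdvd := hcop.dvd_of_dvd_mul_left (Dvd.intro (discr K) (by rw [hm]; ring))
      rcases Int.isUnit_iff.mp (hsq _ hdvd) with h | h <;> rw [h] <;> norm_num
  have hm1 := sq_pos_of_ne_zero hm0
  constructor <;> nlinarith [abs_nonneg (discr K)]

theorem exists_quadratic_numberField (hd : ¬IsSquare d) :
    ∃ (K : Type) (_ : Field K) (_ : NumberField K),
      (∃ x : K, x * x = d) ∧ Module.finrank ℚ K = 2 := by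
  have : Fact (∀ r : ℚ, r ^ 2 ≠ d + 0 * r) := ⟨fun r hr ↦
    hd (Rat.isSquare_intCast_iff.mp ⟨r, by linear_combination -hr⟩)⟩
  have : CharZero (QuadraticAlgebra ℚ d 0) := algebraRat.charZero _
  refine ⟨QuadraticAlgebra ℚ d 0, inferInstance, { }, ⟨⟨0, 1⟩, ?_⟩,
    QuadraticAlgebra.finrank_eq_two _ _⟩
  ext <;> simp

end QuadraticField

section ClassGroup

theorem exists_injective_hom_zmod_prod {G : Type*} [CommGroup G] {n : ℕ} [NeZero n] {a b : G}
    (ha : a ^ n = 1) (hb : b ^ n = 1)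
    (hab : ∀ i < n, ∀ j < n, a ^ i * b ^ j = 1 → i = 0 ∧ j = 0) :
    ∃ f : Multiplicative (ZMod n × ZMod n) →* G, Function.Injective f := by
  let powHom (c : G) (hc : c ^ n = 1) : ZMod n →+ Additive G :=
    ZMod.lift n ⟨zmultiplesHom _ (.ofMul c), by
      rw [zmultiplesHom_apply, natCast_zsmul, ← ofMul_pow, hc, ofMul_one]⟩
  have powHom_apply (c : G) (hc : c ^ n = 1) (i : ZMod n) :
      powHom c hc i = .ofMul (c ^ i.val) := by
    conv_lhs => rw [← ZMod.natCast_zmod_val i, ← Int.cast_natCast]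
    rw [ZMod.lift_coe, zmultiplesHom_apply, natCast_zsmul, ofMul_pow]
  refine ⟨AddMonoidHom.toMultiplicativeLeft ((powHom a ha).coprod (powHom b hb)), ?_⟩
  rw [injective_iff_map_eq_one]
  rintro ⟨i, j⟩ hij
  have hij' : powHom a ha i + powHom b hb j = 0 := hij
  rw [powHom_apply a ha, powHom_apply b hb, ← ofMul_mul, ofMul_eq_zero] at hij'
  obtain ⟨hi, hj⟩ := hab _ i.val_lt _ j.val_lt hij'
  rw [ZMod.val_eq_zero] at hi hj
  rw [hi, hj]
  rfl

variable {R : Type*} [CommRing R] [IsDedekindDomain R]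

theorem exists_ideal_pow_eq_span_singleton {g h c : R} {n : ℕ} (hgh : IsCoprime g h)
    (hc : g * h = c ^ n) : ∃ I : Ideal R, I ^ n = Ideal.span {g} := by
  let _ : GCDMonoid (Ideal R) := UniqueFactorizationMonoid.toGCDMonoid _
  obtain ⟨I, hI⟩ := exists_eq_pow_of_mul_eq_pow_of_coprime
    (Ideal.isCoprime_span_singleton_iff g h |>.mpr hgh)
    (by rw [Ideal.span_singleton_mul_span_singleton, hc, Ideal.span_singleton_pow])
  exact ⟨I, hI.symm⟩

theorem exists_injective_hom_classGroup {n : ℕ} [NeZero n] {g h : R} (hg : g ≠ 0) (hh : h ≠ 0)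
    {I J : Ideal R} (hI : I ^ n = Ideal.span {g}) (hJ : J ^ n = Ideal.span {h})
    (hgh : ∀ i < n, ∀ j < n, ∀ z : R, Associated (g ^ i * h ^ j) (z ^ n) → i = 0 ∧ j = 0) :
    ∃ f : Multiplicative (ZMod n × ZMod n) →* ClassGroup R, Function.Injective f := by
  have mem_nonZeroDivisors {I : Ideal R} {g : R} (hg : g ≠ 0) (hI : I ^ n = Ideal.span {g}) :
      I ∈ nonZeroDivisors (Ideal R) := by
    rw [mem_nonZeroDivisors_iff_ne_zero]
    rintro rfl
    rw [zero_pow (NeZero.ne n), eq_comm, Ideal.zero_eq_bot, Ideal.span_singleton_eq_bot] at hI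
    exact hg hI
  have mk0_pow {I : Ideal R} {g : R} (hg : g ≠ 0) (hI : I ^ n = Ideal.span {g}) :
      ClassGroup.mk0 ⟨I, mem_nonZeroDivisors hg hI⟩ ^ n = 1 := by
    rw [← map_pow, ClassGroup.mk0_eq_one_iff]
    exact ⟨g, by simp [hI]⟩
  refine exists_injective_hom_zmod_prod (mk0_pow hg hI) (mk0_pow hh hJ) fun i hi j hj hij ↦ ?_
  rw [← map_pow, ← map_pow, ← map_mul, ClassGroup.mk0_eq_one_iff] at hij
  obtain ⟨z, hz⟩ := hij
  have hz' : I ^ i * J ^ j = Ideal.span {z} := by simpa using hz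
  refine hgh i hi j hj z ?_
  rw [← Ideal.span_singleton_eq_span_singleton, ← Ideal.span_singleton_mul_span_singleton,
    ← Ideal.span_singleton_pow, ← Ideal.span_singleton_pow, ← Ideal.span_singleton_pow, ← hz',
    ← hI, ← hJ]
  ring

end ClassGroup

section QuadraticField

variable {K : Type*} [Field K] [NumberField K] {d : ℤ} {x : K}

theorem exists_conj_integers_of_sq_sub_eq (hx : x * x = d) {t e c : ℤ}
    (h : t ^ 2 - d * e ^ 2 = 4 * c) :
    ∃ g g' : 𝓞 K, 2 * (g : K) = t + e * x ∧ g + g' = t ∧ g * g' = c := by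
  have hK : (t : K) ^ 2 - x * x * e ^ 2 = 4 * c := by
    rw [hx]
    exact_mod_cast congrArg (Int.cast : ℤ → K) h
  have hint (f : K) (hf : f ^ 2 = e ^ 2) :
      ∃ g : 𝓞 K, algebraMap (𝓞 K) K g = (t + f * x) / 2 := by
    refine IsIntegralClosure.isIntegral_iff.mp
      ⟨.X ^ 2 - .C t * .X + .C c, by monicity!, ?_⟩
    rw [Polynomial.eval₂_add, Polynomial.eval₂_sub, Polynomial.eval₂_mul, Polynomial.eval₂_X_pow,
      Polynomial.eval₂_C, Polynomial.eval₂_C, Polynomial.eval₂_X, eq_intCast, eq_intCast]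
    linear_combination (x ^ 2 / 4) * hf - hK / 4
  obtain ⟨g, hg⟩ := hint e rfl
  obtain ⟨g', hg'⟩ := hint (-e) (neg_sq _)
  refine ⟨g, g', ?_, ?_, ?_⟩
  · exact (congrArg (2 * ·) hg).trans (mul_div_cancel₀ _ two_ne_zero)
  · apply RingOfIntegers.coe_injective
    rw [map_add, hg, hg', map_intCast]
    ring
  · apply RingOfIntegers.coe_injective
    rw [map_mul, hg, hg', map_intCast]
    linear_combination hK / 4

theorem exists_integer_ideal_pow_of_sq_sub_eq (hx : x * x = d) {t e r : ℤ} {n : ℕ}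
    (h : t ^ 2 - d * e ^ 2 = 4 * r ^ n) (htr : IsCoprime t r) (hr : r ≠ 0) :
    ∃ (g : 𝓞 K) (I : Ideal (𝓞 K)), g ≠ 0 ∧ 2 * (g : K) = t + e * x ∧ I ^ n = Ideal.span {g} := by
  obtain ⟨g, g', hg, hadd, hmul⟩ := exists_conj_integers_of_sq_sub_eq hx h
  rw [Int.cast_pow] at hmul
  have hcop : IsCoprime g g' := by
    obtain ⟨a, b, hab⟩ := (htr.pow_right (n := n)).map (Int.castRingHom (𝓞 K))
    simp only [eq_intCast, Int.cast_pow] at hab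
    rw [← hadd, ← hmul] at hab
    exact ⟨a + b * g', a, by linear_combination hab⟩
  obtain ⟨I, hI⟩ := exists_ideal_pow_eq_span_singleton (c := (r : 𝓞 K)) hcop hmul
  refine ⟨g, I, ?_, hg, hI⟩
  rintro rfl
  rw [zero_mul, eq_comm] at hmul
  exact pow_ne_zero n (Int.cast_ne_zero.mpr hr) hmul

theorem exists_injective_hom_classGroup_of_sq_sub_eq (hd : d < -4) (hsq : Squarefree d)
    (hx : x * x = d) (hK : Module.finrank ℚ K = 2) {n : ℕ} [NeZero n] {t₁ e₁ r₁ t₂ e₂ r₂ : ℤ}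
    (h₁ : t₁ ^ 2 - d * e₁ ^ 2 = 4 * r₁ ^ n) (h₂ : t₂ ^ 2 - d * e₂ ^ 2 = 4 * r₂ ^ n)
    (hc₁ : IsCoprime t₁ r₁) (hc₂ : IsCoprime t₂ r₂) (hr₁ : r₁ ≠ 0) (hr₂ : r₂ ≠ 0)
    (hind : ∀ i < n, ∀ j < n, ∀ (y : ℤ√d) (ε : ℤ), ε = 1 ∨ ε = -1 →
      2 ^ n * (⟨t₁, e₁⟩ : ℤ√d) ^ i * (⟨t₂, e₂⟩ : ℤ√d) ^ j = ε * 2 ^ (i + j) * y ^ n →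
      i = 0 ∧ j = 0) :
    ∃ f : Multiplicative (ZMod n × ZMod n) →* ClassGroup (𝓞 K), Function.Injective f := by
  have hd0 : ¬IsSquare d := fun h ↦ by linarith [h.nonneg]
  obtain ⟨g₁, I₁, hg₁0, hg₁, hI₁⟩ := exists_integer_ideal_pow_of_sq_sub_eq hx h₁ hc₁ hr₁
  obtain ⟨g₂, I₂, hg₂0, hg₂, hI₂⟩ := exists_integer_ideal_pow_of_sq_sub_eq hx h₂ hc₂ hr₂
  refine exists_injective_hom_classGroup hg₁0 hg₂0 hI₁ hI₂ fun i hi j hj z hz ↦ ?_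
  obtain ⟨u, hu⟩ := hz.symm
  obtain ⟨a, b, hab⟩ :=
    exists_two_mul_eq_add_mul_sqrt hd0 hsq hx hK (RingOfIntegers.isIntegral_coe z)
  obtain ⟨ε, hε, huε⟩ : ∃ ε : ℤ, (ε = 1 ∨ ε = -1) ∧ ((u : 𝓞 K) : K) = ε := by
    rcases units_eq_one_or_neg_one hd hsq hx hK u with h | h
    · exact ⟨1, .inl rfl, by simp [h]⟩
    · exact ⟨-1, .inr rfl, by simp [h]⟩
  let φ : ℤ√d →+* K := Zsqrtd.lift ⟨x, hx⟩
  have hφ (p q : ℤ) : φ ⟨p, q⟩ = p + q * x := rfl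
  have hφinj : Function.Injective φ := Zsqrtd.lift_injective _ fun m hm ↦ hd0 ⟨m, hm⟩
  refine hind i hi j hj ⟨a, b⟩ ε hε (hφinj ?_)
  have huK := congrArg (algebraMap (𝓞 K) K) hu
  simp only [map_mul, map_pow, huε] at huK
  simp only [map_mul, map_pow, map_ofNat, map_intCast]
  rw [hφ t₁, hφ t₂, hφ a, ← hg₁, ← hg₂, ← hab, mul_pow, mul_pow, mul_pow, pow_add]
  linear_combination (-2 ^ n * (2 : K) ^ i * 2 ^ j) * huK

end QuadraticField

section Forms

variable {R : Type*} [CommRing R]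

/-- The quadratic form `W`, common denominator of the two parametrisations `formR₁ / formW` and
`formR₂ / formW`. Like all forms below, it is defined over an arbitrary commutative ring so that
it can be reduced modulo `n` and evaluated at real points. -/
def formW (u v : R) : R := v ^ 2 + 12 * u ^ 2

/-- Numerator of the first parameter `R₁ / W`. -/
def formR₁ (u v : R) : R := -263 * v ^ 2 - 77 * u * v + 690 * u ^ 2

/-- Numerator of the second parameter `R₂ / W`, chosen so that the cubic `cubicForm` takes the same
value at `R₁ / W` and at `R₂ / W`. -/
def formR₂ (u v : R) : R := -13 * v ^ 2 - 923 * u * v - 2310 * u ^ 2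

/-- The common value `cubicForm R₁ W = cubicForm R₂ W`. -/
def formG (u v : R) : R :=
  -240347 * v ^ 6 - 17767750 * u * v ^ 5 + 867410541 * u ^ 2 * v ^ 4 +
    710710000 * u ^ 3 * v ^ 3 - 7112334168 * u ^ 4 * v ^ 2 - 2558556000 * u ^ 5 * v +
    13601688912 * u ^ 6

/-- The form of degree `8` whose squarefree kernels are the radicands: `ℚ(√F(u, v))` has 7-rank at
least `2`. -/
def formF (u v : R) : R := formW u v * formG u v

/-- The homogenised cubic `c` of the identity `w A² - c B² = -4 r⁷`, which makes
`(w A² + 2 r⁷)² - w c A² B²` equal to `4 r¹⁴`. -/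
def cubicForm (r w : R) : R := 4 * r ^ 3 + 1233 * r ^ 2 * w + 49280 * r * w ^ 2 + 200704 * w ^ 3

/-- The cofactor `A` in `w A² - c B² = -4 r⁷`. -/
def formA (r w : R) : R := 28672 * w ^ 3 + 11136 * w ^ 2 * r + 1255 * w * r ^ 2 + 37 * r ^ 3

/-- The cofactor `B` in `w A² - c B² = -4 r⁷`. -/
def formB (r w : R) : R := 64 * w ^ 2 + 17 * w * r + r ^ 2

/-- The trace `w A² + 2 r⁷` of the quadratic integer of norm `r¹⁴` given by `cubicForm`. -/
def traceForm (r w : R) : R := w * formA r w ^ 2 + 2 * r ^ 7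

theorem cubicForm_formR₁ (u v : R) : cubicForm (formR₁ u v) (formW u v) = formG u v := by
  unfold cubicForm formR₁ formW formG
  ring

theorem cubicForm_formR₂ (u v : R) : cubicForm (formR₂ u v) (formW u v) = formG u v := by
  unfold cubicForm formR₂ formW formG
  ring

theorem mul_formA_sq_sub_cubicForm_mul_formB_sq (r w : R) :
    w * formA r w ^ 2 - cubicForm r w * formB r w ^ 2 = -4 * r ^ 7 := by
  unfold cubicForm formA formB
  ring

theorem traceForm_sq_sub {r w d s : R} (h : w * cubicForm r w = d * s ^ 2) :
    traceForm r w ^ 2 - d * (formA r w * formB r w * s) ^ 2 = 4 * (r ^ 2) ^ 7 := by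
  unfold traceForm
  linear_combination formA r w ^ 2 * formB r w ^ 2 * h +
    w * formA r w ^ 2 * mul_formA_sq_sub_cubicForm_mul_formB_sq r w

@[norm_cast]
theorem intCast_formW (u v : ℤ) : (formW u v : ℤ) = formW (u : R) v := by simp [formW]

@[norm_cast]
theorem intCast_formR₁ (u v : ℤ) : (formR₁ u v : ℤ) = formR₁ (u : R) v := by simp [formR₁]

@[norm_cast]
theorem intCast_formR₂ (u v : ℤ) : (formR₂ u v : ℤ) = formR₂ (u : R) v := by simp [formR₂]

@[norm_cast]
theorem intCast_formG (u v : ℤ) : (formG u v : ℤ) = formG (u : R) v := by simp [formG]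

@[norm_cast]
theorem intCast_formF (u v : ℤ) : (formF u v : ℤ) = formF (u : R) v := by
  simp [formF, intCast_formW, intCast_formG]

@[norm_cast]
theorem intCast_formA (r w : ℤ) : (formA r w : ℤ) = formA (r : R) w := by simp [formA]

@[norm_cast]
theorem intCast_formB (r w : ℤ) : (formB r w : ℤ) = formB (r : R) w := by simp [formB]

@[norm_cast]
theorem intCast_traceForm (r w : ℤ) : (traceForm r w : ℤ) = traceForm (r : R) w := by
  simp [traceForm, intCast_formA]

end Forms

section Admissible

/-- The product of all the primes that are bad for the family: those dividing one of the resultants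
below, together with the auxiliary primes `29` and `43` at which independence is tested. -/
def badModulus : ℕ := 2 * 3 * 7 * 19 * 29 * 41 * 43 * 317 * 379 * 2027

/-- The integer points `(u, v)` at which the family is used: coprime, and congruent to `(0, 1)`
modulo `badModulus`. -/
structure IsAdmissible (P : ℤ × ℤ) : Prop where
  isCoprime : IsCoprime P.1 P.2
  dvd_fst : (badModulus : ℤ) ∣ P.1
  dvd_snd_sub_one : (badModulus : ℤ) ∣ P.2 - 1

theorem isCoprime_of_intCast_eq {a b : ℤ} {n : ℕ} (h : (a : ZMod n) = b) (hb : IsCoprime b n) :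
    IsCoprime a n := by
  obtain ⟨k, hk⟩ := (ZMod.intCast_eq_intCast_iff_dvd_sub b a n).mp h.symm
  rw [show a = b + n * k by linarith]
  exact hb.add_mul_left_left k

theorem isCoprime_of_dvd_pow {a b c : ℤ} {k : ℕ} (h : IsCoprime a b) (hc : c ∣ b ^ k) :
    IsCoprime a c :=
  h.pow_right.of_isCoprime_of_dvd_right hc

theorem isCoprime_of_add_eq_mul_pow {R : Type*} [CommRing R] {x y u v a b c a' b' c' : R}
    {m n : ℕ} (huv : IsCoprime u v) (hc : IsCoprime y c) (hc' : IsCoprime y c')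
    (h : a * x + b * y = c * v ^ n) (h' : a' * x + b' * y = c' * u ^ m) : IsCoprime x y := by
  obtain ⟨α, β, hα⟩ := hc
  obtain ⟨α', β', hα'⟩ := hc'
  obtain ⟨p, q, hpq⟩ := huv.pow (m := m) (n := n)
  refine ⟨p * β' * a' + q * β * a,
    p * u ^ m * α' + q * v ^ n * α + p * β' * b' + q * β * b, ?_⟩
  linear_combination hpq + p * u ^ m * hα' + q * v ^ n * hα + p * β' * h' + q * β * h

theorem isCoprime_traceForm {r w : ℤ} (hwr : IsCoprime w r) (hr : IsCoprime r badModulus) :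
    IsCoprime (traceForm r w) r := by
  have hA : traceForm r w = 28672 ^ 2 * w ^ 7 + r * (w * (11136 * w ^ 2 + 1255 * w * r +
      37 * r ^ 2) * (formA r w + 28672 * w ^ 3) + 2 * r ^ 6) := by
    unfold traceForm formA
    ring
  have h28672 : IsCoprime r 28672 :=
    isCoprime_of_dvd_pow (k := 12) hr (by norm_num [badModulus])
  rw [hA]
  exact (h28672.symm.pow_left.mul_left hwr.pow_left).add_mul_left_left _

namespace IsAdmissible

variable {P : ℤ × ℤ} (hP : IsAdmissible P)
include hP

theorem fst_zmod {n : ℕ} (hn : n ∣ badModulus) : (P.1 : ZMod n) = 0 :=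
  (ZMod.intCast_zmod_eq_zero_iff_dvd _ n).mpr ((Int.natCast_dvd_natCast.mpr hn).trans hP.dvd_fst)

theorem snd_zmod {n : ℕ} (hn : n ∣ badModulus) : (P.2 : ZMod n) = 1 := by
  have h := (ZMod.intCast_zmod_eq_zero_iff_dvd _ n).mpr
    ((Int.natCast_dvd_natCast.mpr hn).trans hP.dvd_snd_sub_one)
  rwa [Int.cast_sub, Int.cast_one, sub_eq_zero] at h

theorem isCoprime_formR₁_badModulus : IsCoprime (formR₁ P.1 P.2) badModulus := by
  refine isCoprime_of_intCast_eq (b := -263) ?_ (by norm_num [badModulus])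
  rw [intCast_formR₁, hP.fst_zmod dvd_rfl, hP.snd_zmod dvd_rfl]
  simp [formR₁]

theorem isCoprime_formR₂_badModulus : IsCoprime (formR₂ P.1 P.2) badModulus := by
  refine isCoprime_of_intCast_eq (b := -13) ?_ (by norm_num [badModulus])
  rw [intCast_formR₂, hP.fst_zmod dvd_rfl, hP.snd_zmod dvd_rfl]
  simp [formR₂]

theorem isCoprime_formF_badModulus : IsCoprime (formF P.1 P.2) badModulus := by
  refine isCoprime_of_intCast_eq (b := -240347) ?_ (by norm_num [badModulus])
  rw [intCast_formF, hP.fst_zmod dvd_rfl, hP.snd_zmod dvd_rfl]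
  simp [formF, formW, formG]

theorem isCoprime_formW_formR₁ : IsCoprime (formW P.1 P.2) (formR₁ P.1 P.2) := by
  refine isCoprime_of_add_eq_mul_pow (n := 3) (m := 3) (c := 619286) (c' := 24 * 619286)
    (a := 113537 * P.2 - 26565 * P.1) (b := -1923 * P.2 + 462 * P.1)
    (a' := 1017427 * P.1 + 20251 * P.2) (b' := 3846 * P.1 + 77 * P.2) hP.isCoprime
    (isCoprime_of_dvd_pow (k := 1) hP.isCoprime_formR₁_badModulus (by norm_num [badModulus]))
    (isCoprime_of_dvd_pow (k := 4) hP.isCoprime_formR₁_badModulus (by norm_num [badModulus])) ?_ ?_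
  all_goals
    unfold formW formR₁
    ring

theorem isCoprime_formW_formR₂ : IsCoprime (formW P.1 P.2) (formR₂ P.1 P.2) := by
  refine isCoprime_of_add_eq_mul_pow (n := 3) (m := 3) (c := 619286) (c' := 24 * 619286)
    (a := 633287 * P.2 + 1066065 * P.1) (b := 1077 * P.2 + 5538 * P.1)
    (a' := 823927 * P.1 + 11999 * P.2) (b' := -2154 * P.1 + 923 * P.2) hP.isCoprime
    (isCoprime_of_dvd_pow (k := 1) hP.isCoprime_formR₂_badModulus (by norm_num [badModulus]))
    (isCoprime_of_dvd_pow (k := 4) hP.isCoprime_formR₂_badModulus (by norm_num [badModulus])) ?_ ?_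
  all_goals
    unfold formW formR₂
    ring

end IsAdmissible

end Admissible

section Independence

theorem exists_zsqrtd_hom_of_mul_self_eq {F : Type*} [Field F] {d s c : ℤ} (hc : c = d * s ^ 2)
    {ρ : F} (hρ : ρ * ρ = c) (hρ0 : ρ ≠ 0) :
    ∃ ψ : ℤ√d →+* F, ∀ a b : ℤ, ψ ⟨a, b * s⟩ = a + b * ρ := by
  have hds : ρ * ρ = d * s ^ 2 := by rw [hρ, hc]; push_cast; rfl
  have hs : (s : F) ≠ 0 := by
    intro hs
    rw [hs, zero_pow two_ne_zero, mul_zero] at hds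
    exact hρ0 (mul_self_eq_zero.mp hds)
  refine ⟨Zsqrtd.lift ⟨ρ / s, ?_⟩, fun a b ↦ ?_⟩
  · field_simp
    linear_combination hds
  · rw [Zsqrtd.lift_apply_apply]
    push_cast
    field_simp

theorem pow_mul_pow_eq_two_pow_of_eq {q m n : ℕ} [Fact q.Prime] (hq : q = n * m + 1) (hm : Even m)
    (hn : n ≠ 0) (h2 : (2 : ZMod q) ≠ 0) {x y z : ZMod q} (hx : x ≠ 0) (hy : y ≠ 0) {ε : ℤ}
    (hε : ε = 1 ∨ ε = -1) {i j : ℕ} (h : 2 ^ n * x ^ i * y ^ j = ε * 2 ^ (i + j) * z ^ n) :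
    (x ^ m) ^ i * (y ^ m) ^ j = (2 ^ m) ^ (i + j) := by
  have hz : z ≠ 0 := by
    rintro rfl
    rw [zero_pow hn, mul_zero] at h
    exact mul_ne_zero (mul_ne_zero (pow_ne_zero _ h2) (pow_ne_zero _ hx)) (pow_ne_zero _ hy) h
  have pow_eq_one {a : ZMod q} (ha : a ≠ 0) : (a ^ n) ^ m = 1 := by
    rw [← pow_mul, show n * m = q - 1 by omega, ZMod.pow_card_sub_one_eq_one ha]
  have hεm : (ε : ZMod q) ^ m = 1 := by
    rcases hε with rfl | rfl
    · simp
    · simp [hm]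
  calc (x ^ m) ^ i * (y ^ m) ^ j = (2 ^ n * x ^ i * y ^ j) ^ m := by
        rw [mul_pow, mul_pow, pow_eq_one h2, one_mul, pow_right_comm x, pow_right_comm y]
    _ = (2 ^ m) ^ (i + j) := by
        rw [h, mul_pow, mul_pow, pow_eq_one hz, hεm, one_mul, mul_one, pow_right_comm]

instance fact_prime_twentyNine : Fact (Nat.Prime 29) := ⟨by norm_num⟩

instance fact_prime_fortyThree : Fact (Nat.Prime 43) := ⟨by norm_num⟩

namespace IsAdmissible

variable {P : ℤ × ℤ} (hP : IsAdmissible P)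
include hP

theorem pow_mul_pow_eq_of_prime {q m : ℕ} [Fact q.Prime] (hqM : q ∣ badModulus)
    (hq : q = 7 * m + 1) (hm : Even m) (h2 : (2 : ZMod q) ≠ 0) {ρ : ZMod q}
    (hρ : ρ * ρ = formF 0 1) (hρ0 : ρ ≠ 0)
    {x₁ x₂ : ZMod q} (h₁ : traceForm (-263) 1 + formA (-263) 1 * formB (-263) 1 * ρ = x₁)
    (h₂ : traceForm (-13) 1 + formA (-13) 1 * formB (-13) 1 * ρ = x₂) (hx₁ : x₁ ≠ 0) (hx₂ : x₂ ≠ 0)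
    {d s : ℤ} (hF : formF P.1 P.2 = d * s ^ 2) {i j : ℕ} {y : ℤ√d} {ε : ℤ} (hε : ε = 1 ∨ ε = -1)
    (h : 2 ^ 7 *
        (⟨traceForm (formR₁ P.1 P.2) (formW P.1 P.2), formA (formR₁ P.1 P.2) (formW P.1 P.2) *
          formB (formR₁ P.1 P.2) (formW P.1 P.2) * s⟩ : ℤ√d) ^ i *
        (⟨traceForm (formR₂ P.1 P.2) (formW P.1 P.2), formA (formR₂ P.1 P.2) (formW P.1 P.2) *
          formB (formR₂ P.1 P.2) (formW P.1 P.2) * s⟩ : ℤ√d) ^ j = ε * 2 ^ (i + j) * y ^ 7) :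
    (x₁ ^ m) ^ i * (x₂ ^ m) ^ j = (2 ^ m) ^ (i + j) := by
  obtain ⟨ψ, hψ⟩ := exists_zsqrtd_hom_of_mul_self_eq hF
    (hρ.trans (by rw [intCast_formF, hP.fst_zmod hqM, hP.snd_zmod hqM])) hρ0
  have hW : formW (0 : ZMod q) 1 = 1 := by simp [formW]
  have hR₁ : formR₁ (0 : ZMod q) 1 = -263 := by simp [formR₁]
  have hR₂ : formR₂ (0 : ZMod q) 1 = -13 := by simp [formR₂]
  have hψh := congrArg ψ h
  simp only [map_mul, map_pow, map_ofNat, map_intCast, hψ, Int.cast_mul, intCast_traceForm,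
    intCast_formA, intCast_formB, intCast_formR₁, intCast_formR₂, intCast_formW,
    hP.fst_zmod hqM, hP.snd_zmod hqM, hW, hR₁, hR₂, h₁, h₂] at hψh
  exact pow_mul_pow_eq_two_pow_of_eq hq hm (by norm_num) h2 hx₁ hx₂ hε hψh

theorem eq_zero_of_eq_two_pow_mul_pow {d s : ℤ} (hF : formF P.1 P.2 = d * s ^ 2)
    {i j : ℕ} (hi : i < 7) (hj : j < 7) {y : ℤ√d} {ε : ℤ} (hε : ε = 1 ∨ ε = -1)
    (h : 2 ^ 7 *
        (⟨traceForm (formR₁ P.1 P.2) (formW P.1 P.2), formA (formR₁ P.1 P.2) (formW P.1 P.2) *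
          formB (formR₁ P.1 P.2) (formW P.1 P.2) * s⟩ : ℤ√d) ^ i *
        (⟨traceForm (formR₂ P.1 P.2) (formW P.1 P.2), formA (formR₂ P.1 P.2) (formW P.1 P.2) *
          formB (formR₂ P.1 P.2) (formW P.1 P.2) * s⟩ : ℤ√d) ^ j = ε * 2 ^ (i + j) * y ^ 7) :
    i = 0 ∧ j = 0 := by
  have h29 : ((11 : ZMod 29) ^ 4) ^ i * (18 ^ 4) ^ j = (2 ^ 4) ^ (i + j) :=
    hP.pow_mul_pow_eq_of_prime (q := 29) (m := 4) (ρ := 11) (by decide) rfl (by decide)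
      (by decide) (by decide) (by decide) (by decide) (by decide) (by decide) (by decide) hF hε h
  have h43 : ((12 : ZMod 43) ^ 6) ^ i * (34 ^ 6) ^ j = (2 ^ 6) ^ (i + j) :=
    hP.pow_mul_pow_eq_of_prime (q := 43) (m := 6) (ρ := 18) (by decide) rfl (by decide)
      (by decide) (by decide) (by decide) (by decide) (by decide) (by decide) (by decide) hF hε h
  clear h
  interval_cases i <;> interval_cases j <;>
    first
    | exact ⟨rfl, rfl⟩
    | exact absurd h29 (by decide)
    | exact absurd h43 (by decide)

theorem exists_injective_hom_classGroup {K : Type*} [Field K] [NumberField K] {d : ℤ}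
    (hd : d < -4) (hsq : Squarefree d) {x : K} (hx : x * x = d) (hK : Module.finrank ℚ K = 2)
    {s : ℤ} (hF : formF P.1 P.2 = d * s ^ 2) :
    ∃ f : Multiplicative (ZMod 7 × ZMod 7) →* ClassGroup (𝓞 K), Function.Injective f := by
  have ne_zero {r : ℤ} (hr : IsCoprime r badModulus) : r ≠ 0 := by
    rintro rfl
    exact absurd (isCoprime_zero_left.mp hr) (by norm_num [badModulus, Int.isUnit_iff])
  have h₁ := hP.isCoprime_formR₁_badModulus
  have h₂ := hP.isCoprime_formR₂_badModulus
  exact exists_injective_hom_classGroup_of_sq_sub_eq hd hsq hx hK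
    (traceForm_sq_sub (by rw [cubicForm_formR₁]; exact hF))
    (traceForm_sq_sub (by rw [cubicForm_formR₂]; exact hF))
    (isCoprime_traceForm hP.isCoprime_formW_formR₁ h₁).pow_right
    (isCoprime_traceForm hP.isCoprime_formW_formR₂ h₂).pow_right
    (pow_ne_zero 2 (ne_zero h₁)) (pow_ne_zero 2 (ne_zero h₂))
    fun i hi j hj y ε hε h ↦ hP.eq_zero_of_eq_two_pow_mul_pow hF hi hj hε h

end IsAdmissible

end Independence

section RootsModPrimePow

open Polynomial

theorem eq_of_isNilpotent_sub_of_aeval_eq_zero {R : Type*} [CommRing R] {f : ℤ[X]} {x y : R}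
    (hx : aeval x f = 0) (hy : aeval y f = 0) (hxy : IsNilpotent (x - y))
    (hf : IsUnit (aeval x (derivative f))) : x = y := by
  have hnil : IsNilpotent (aeval x f) := by simp [hx]
  exact (existsUnique_nilpotent_sub_and_aeval_eq_zero hnil hf).unique
    ⟨by simp, hx⟩ ⟨hxy, hy⟩

theorem isNilpotent_of_cast_eq_zero {p k : ℕ} (hk : k ≠ 0) {x : ZMod (p ^ k)}
    (hx : ZMod.castHom (dvd_pow_self p hk) (ZMod p) x = 0) : IsNilpotent x := by
  obtain ⟨a, rfl⟩ := ZMod.intCast_surjective x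
  rw [map_intCast, ZMod.intCast_zmod_eq_zero_iff_dvd] at hx
  refine ⟨k, ?_⟩
  rw [← Int.cast_pow, ZMod.intCast_zmod_eq_zero_iff_dvd]
  exact_mod_cast pow_dvd_pow_of_dvd hx k

theorem isUnit_intCast_zmod {n : ℕ} {a : ℤ} (h : IsCoprime a n) : IsUnit (a : ZMod n) := by
  obtain ⟨x, y, hxy⟩ := h
  refine IsUnit.of_mul_eq_one (x : ZMod n) ?_
  simpa [mul_comm] using congrArg (Int.cast : ℤ → ZMod n) hxy

theorem card_le_natDegree_of_isPrimePow {n : ℕ} (hn : IsPrimePow n) {f S T : ℤ[X]} {c : ℤ}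
    (h : S * f + T * derivative f = C c) (hc : IsCoprime c n) {s : Finset (ZMod n)}
    (hs : ∀ x ∈ s, aeval x f = 0) : s.card ≤ f.natDegree := by
  classical
  obtain ⟨p, k, hp, hk, rfl⟩ := hn
  have : Fact p.Prime := ⟨hp.nat_prime⟩
  have hcp : IsUnit (c : ZMod p) :=
    isUnit_intCast_zmod (hc.of_isCoprime_of_dvd_right (mod_cast dvd_pow_self p hk.ne'))
  set φ := ZMod.castHom (dvd_pow_self p hk.ne') (ZMod p)
  have hderiv : ∀ x ∈ s, IsUnit (aeval x (derivative f)) := fun x hx ↦ by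
    have hx' := congrArg (aeval x) h
    rw [map_add, map_mul, map_mul, hs x hx, mul_zero, zero_add, aeval_C,
      algebraMap_int_eq, eq_intCast] at hx'
    exact isUnit_of_mul_isUnit_right (hx' ▸ isUnit_intCast_zmod hc)
  have hinj : Set.InjOn φ s := fun x hx y hy hxy ↦
    eq_of_isNilpotent_sub_of_aeval_eq_zero (hs x hx) (hs y hy)
      (isNilpotent_of_cast_eq_zero hk.ne' (by rw [map_sub, sub_eq_zero]; exact hxy)) (hderiv x hx)
  have hmap : f.map (Int.castRingHom (ZMod p)) ≠ 0 := fun h0 ↦ by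
    have h' := congrArg (map (Int.castRingHom (ZMod p))) h
    rw [Polynomial.map_add, Polynomial.map_mul, Polynomial.map_mul, ← derivative_map, h0, map_C]
      at h'
    simp only [mul_zero, derivative_zero, add_zero, eq_intCast] at h'
    exact hcp.ne_zero (C_eq_zero.mp h'.symm)
  rw [← Finset.card_image_of_injOn hinj]
  refine (card_le_degree_of_subset_roots fun y hy ↦ ?_).trans
    (natDegree_map_le (f := Int.castRingHom (ZMod p)))
  obtain ⟨x, hx, rfl⟩ := Finset.mem_image.mp hy
  rw [mem_roots hmap, IsRoot.def, eval_map, ← algebraMap_int_eq, ← aeval_def]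
  exact (aeval_algHom_apply φ.toIntAlgHom x f).trans (by rw [hs x hx, map_zero])

theorem natDegree_formF_X_le : (formF X 1 : ℤ[X]).natDegree ≤ 8 := by
  unfold formF formW formG
  compute_degree

theorem aeval_formF {R : Type*} [CommRing R] (x : R) :
    aeval x (formF X 1 : ℤ[X]) = formF x 1 := by
  simp [formF, formW, formG, map_ofNat]

theorem formF_mul {R : Type*} [CommRing R] (k u v : R) :
    formF (k * u) (k * v) = k ^ 8 * formF u v := by
  unfold formF formW formG
  ring

theorem exists_mul_formF_X_add_mul_derivative : ∃ S T : ℤ[X],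
    S * formF X 1 + T * derivative (formF X 1) =
      C 255639284139467629962345203176752493478408202747904 := by
  refine ⟨-764340089479359402077933297601391980348744432
      - 709187502234556286293659333712088010493635750 * X
      - 5743638970314439364749030984905476886746794974 * X ^ 2
      - 11235009338466166292393679195855887091008820000 * X ^ 3
      + 188208805762992422222028544112570870426728533528 * X ^ 4
      + 88579039937568382813480397194411512330967404000 * X ^ 5
      - 569651045835665289634851421158818683510275599232 * X ^ 6,
    -4048483159284210761132961061369657676269000
      + 379958844387357523083037469854138084940938659 * X
      + 231628985139622007329119854947452647774508750 * X ^ 2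
      + 1439841000774167916717196797142747491759306267 * X ^ 3
      + 2308568501734095327179259109454822451622842000 * X ^ 4
      - 31366331566528714723600988072437279584910269432 * X ^ 5
      - 12746671268010586521035310004025456235822132000 * X ^ 6
      + 71206380729458161204356427644852335438784449904 * X ^ 7, ?_⟩
  simp only [formF, formW, formG, derivative_mul, derivative_add, derivative_sub, derivative_neg,
    derivative_X_pow, derivative_X, derivative_one, derivative_ofNat, Nat.cast_ofNat, map_ofNat,
    one_pow]
  ring

end RootsModPrimePow

section Ratio

/-- The residue class of `P.1 / P.2` modulo `n`, a projective coordinate of the point `P`; it is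
meaningful only when `P.2` is prime to `n`. -/
def ratio (n : ℕ) (P : ℤ × ℤ) : ZMod n := P.1 * (P.2 : ZMod n)⁻¹

/-- The determinant of the vectors `P` and `Q`. Two primitive vectors in the open first quadrant
agree as soon as it vanishes. -/
def cross (P Q : ℤ × ℤ) : ℤ := P.1 * Q.2 - Q.1 * P.2

variable {P Q : ℤ × ℤ} {n : ℕ}

theorem ratio_mul_snd (hP : IsUnit (P.2 : ZMod n)) : ratio n P * P.2 = P.1 := by
  rw [ratio, mul_assoc, ZMod.inv_mul_of_unit _ hP, mul_one]

theorem dvd_cross_of_ratio_eq (hP : IsUnit (P.2 : ZMod n)) (hQ : IsUnit (Q.2 : ZMod n))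
    (h : ratio n P = ratio n Q) : (n : ℤ) ∣ cross P Q := by
  rw [← ZMod.intCast_zmod_eq_zero_iff_dvd, cross, Int.cast_sub, Int.cast_mul, Int.cast_mul,
    ← ratio_mul_snd hP, ← ratio_mul_snd hQ, h]
  ring

theorem eq_of_cross_eq_zero (hP : IsCoprime P.1 P.2) (hQ : IsCoprime Q.1 Q.2) (hP0 : 0 < P.1)
    (hQ0 : 0 < Q.1) (h : cross P Q = 0) : P = Q := by
  have e : P.1 * Q.2 = Q.1 * P.2 := sub_eq_zero.mp h
  have e₁ : P.1 = Q.1 := Int.dvd_antisymm hP0.le hQ0.le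
    (hP.dvd_of_dvd_mul_right (Dvd.intro _ e)) (hQ.dvd_of_dvd_mul_right (Dvd.intro _ e.symm))
  rw [e₁] at e
  exact Prod.ext e₁ (mul_left_cancel₀ hQ0.ne' e).symm

theorem le_abs_cross_of_dvd (hP : IsCoprime P.1 P.2) (hQ : IsCoprime Q.1 Q.2) (hP0 : 0 < P.1)
    (hQ0 : 0 < Q.1) (hPQ : P ≠ Q) (h : (n : ℤ) ∣ cross P Q) : (n : ℤ) ≤ |cross P Q| :=
  Int.le_of_dvd (abs_pos.mpr fun h0 ↦ hPQ (eq_of_cross_eq_zero hP hQ hP0 hQ0 h0))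
    ((dvd_abs _ _).mpr h)

/- The slopes of two points differ by `cross P Q / (P.2 * Q.2)`, hence by at least `n / V ^ 2`. -/
theorem card_le_of_dvd_cross {V : ℤ} (hn : 0 < n) {s : Finset (ℤ × ℤ)}
    (hco : ∀ P ∈ s, IsCoprime P.1 P.2) (hpos : ∀ P ∈ s, 0 < P.1) (hle : ∀ P ∈ s, P.1 ≤ P.2)
    (hV : ∀ P ∈ s, P.2 ≤ V) (h : ∀ P ∈ s, ∀ Q ∈ s, (n : ℤ) ∣ cross P Q) :
    (s.card : ℝ) ≤ (V : ℝ) ^ 2 / n + 1 := by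
  set c : ℝ := (V : ℝ) ^ 2 / n
  have hn' : (0 : ℝ) < n := by exact_mod_cast hn
  have hc : 0 ≤ c := by positivity
  have hpos₂ : ∀ P ∈ s, (0 : ℝ) < P.2 := fun P hP ↦ by
    exact_mod_cast (hpos P hP).trans_le (hle P hP)
  have hinj : Set.InjOn (fun P : ℤ × ℤ ↦ ⌊c * (P.1 / P.2 : ℝ)⌋) s := by
    intro P hP Q hQ hPQ
    by_contra hne
    have hcross : (n : ℝ) ≤ |(P.1 : ℝ) * Q.2 - Q.1 * P.2| := by
      exact_mod_cast le_abs_cross_of_dvd (hco P hP) (hco Q hQ) (hpos P hP) (hpos Q hQ) hne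
        (h P hP Q hQ)
    have hP₂ := hpos₂ P hP
    have hQ₂ := hpos₂ Q hQ
    have hlt := Int.abs_sub_lt_one_of_floor_eq_floor hPQ
    have hdiff : c * (P.1 / P.2 : ℝ) - c * (Q.1 / Q.2 : ℝ) =
        c * ((P.1 : ℝ) * Q.2 - Q.1 * P.2) / (P.2 * Q.2) := by field_simp
    rw [hdiff, abs_div, abs_mul, abs_of_nonneg hc, abs_of_pos (mul_pos hP₂ hQ₂),
      div_lt_one (mul_pos hP₂ hQ₂)] at hlt
    have hV₀ : (0 : ℝ) ≤ V := hP₂.le.trans (mod_cast hV P hP)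
    have hVP : (P.2 : ℝ) ≤ V := by exact_mod_cast hV P hP
    have hVQ : (Q.2 : ℝ) ≤ V := by exact_mod_cast hV Q hQ
    refine hlt.not_ge ?_
    calc (P.2 : ℝ) * Q.2 ≤ V * V := by gcongr
      _ = c * n := by rw [← sq, div_mul_cancel₀ _ hn'.ne']
      _ ≤ c * |(P.1 : ℝ) * Q.2 - Q.1 * P.2| := by gcongr
  have hmaps : ∀ P ∈ s, ⌊c * (P.1 / P.2 : ℝ)⌋ ∈ Finset.Icc 0 ⌊c⌋ := fun P hP ↦ by
    have h₁ : (0 : ℝ) < P.1 := by exact_mod_cast hpos P hP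
    have h₂ := hpos₂ P hP
    have h₁₂ : (P.1 : ℝ) ≤ P.2 := by exact_mod_cast hle P hP
    exact Finset.mem_Icc.mpr ⟨Int.floor_nonneg.mpr (by positivity),
      Int.floor_mono (mul_le_of_le_one_right hc ((div_le_one h₂).mpr h₁₂))⟩
  have hcard := Finset.card_le_card_of_injOn _ hmaps hinj
  have hfloor : 0 ≤ ⌊c⌋ := Int.floor_nonneg.mpr hc
  rw [Int.card_Icc, sub_zero] at hcard
  calc (s.card : ℝ) ≤ ((⌊c⌋ + 1 : ℤ) : ℝ) := by exact_mod_cast (by omega : (s.card : ℤ) ≤ ⌊c⌋ + 1)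
    _ ≤ c + 1 := by
      push_cast
      gcongr
      exact Int.floor_le c

end Ratio

section AdmissibleAt

namespace IsAdmissible

variable {P : ℤ × ℤ} (hP : IsAdmissible P)
include hP

theorem isCoprime_formF_snd : IsCoprime (formF P.1 P.2) P.2 := by
  have h₁ : IsCoprime P.2 badModulus := by
    obtain ⟨k, hk⟩ := hP.dvd_snd_sub_one
    exact ⟨1, -k, by linear_combination hk⟩
  have h₂ : IsCoprime P.2 163220266944 :=
    isCoprime_of_dvd_pow (k := 6) h₁ (by norm_num [badModulus])
  rw [show formF P.1 P.2 = 163220266944 * P.1 ^ 8 + P.2 * (-240347 * P.2 ^ 7 -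
    17767750 * P.1 * P.2 ^ 6 + 864526377 * P.1 ^ 2 * P.2 ^ 5 + 497497000 * P.1 ^ 3 * P.2 ^ 4 +
    3296592324 * P.1 ^ 4 * P.2 ^ 3 + 5969964000 * P.1 ^ 5 * P.2 ^ 2 - 71746321104 * P.1 ^ 6 * P.2 -
    30702672000 * P.1 ^ 7) by unfold formF formW formG; ring]
  exact (h₂.symm.mul_left hP.isCoprime.pow_left).add_mul_left_left _

theorem isCoprime_formW_formG : IsCoprime (formW P.1 P.2) (formG P.1 P.2) := by
  have hWF : formW P.1 P.2 ∣ formF P.1 P.2 := Dvd.intro _ rfl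
  have h₁ : IsCoprime (formW P.1 P.2) 118752781528282828 := isCoprime_of_dvd_pow (k := 3)
    (hP.isCoprime_formF_badModulus.of_isCoprime_of_dvd_left hWF) (by norm_num [badModulus])
  have h₂ := hP.isCoprime_formF_snd.of_isCoprime_of_dvd_left hWF
  have h₃ : 118752781528282828 * P.2 ^ 7 =
      formG P.1 P.2 * (639639000 * P.1 - 876063033 * P.2) + formW P.1 P.2 *
      (118542222406490377 * P.2 ^ 5 - 15411933639852750 * P.1 * P.2 ^ 4 -
        651235413631003671 * P.1 ^ 2 * P.2 ^ 3 + 252740350826964000 * P.1 ^ 3 * P.2 ^ 2 +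
        1129374086954432508 * P.1 ^ 4 * P.2 - 725014224498564000 * P.1 ^ 5) := by
    unfold formW formG
    ring
  have h₄ := h₁.mul_right (h₂.pow_right (n := 7))
  rw [h₃] at h₄
  exact (IsCoprime.of_add_mul_left_right h₄).of_mul_right_left

theorem isUnit_snd {n : ℕ} (hn : (n : ℤ) ∣ formF P.1 P.2) : IsUnit (P.2 : ZMod n) :=
  isUnit_intCast_zmod (hP.isCoprime_formF_snd.symm.of_isCoprime_of_dvd_right hn)

theorem formF_ratio_eq_zero {n : ℕ} (hn : (n : ℤ) ∣ formF P.1 P.2) : formF (ratio n P) 1 = 0 := by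
  have h := (ZMod.intCast_zmod_eq_zero_iff_dvd _ n).mpr hn
  have hu := hP.isUnit_snd hn
  rw [intCast_formF, ← ratio_mul_snd hu, mul_comm, ← mul_one (P.2 : ZMod n), mul_assoc,
    one_mul, formF_mul] at h
  exact (hu.pow 8).mul_right_eq_zero.mp h

end IsAdmissible

theorem card_image_ratio_le {n : ℕ} (hn : IsPrimePow n) {s : Finset (ℤ × ℤ)}
    (hs : ∀ P ∈ s, IsAdmissible P) (hF : ∀ P ∈ s, (n : ℤ) ∣ formF P.1 P.2) :
    (s.image (ratio n)).card ≤ 8 := by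
  obtain rfl | ⟨P, hP⟩ := s.eq_empty_or_nonempty
  · simp
  obtain ⟨S, T, hST⟩ := exists_mul_formF_X_add_mul_derivative
  have hc : IsCoprime (255639284139467629962345203176752493478408202747904 : ℤ) n :=
    (isCoprime_of_dvd_pow (k := 33) ((hs P hP).isCoprime_formF_badModulus.of_isCoprime_of_dvd_left
      (hF P hP)) (by norm_num [badModulus])).symm
  refine (card_le_natDegree_of_isPrimePow hn hST hc fun x hx ↦ ?_).trans natDegree_formF_X_le
  obtain ⟨Q, hQ, rfl⟩ := Finset.mem_image.mp hx
  rw [aeval_formF, (hs Q hQ).formF_ratio_eq_zero (hF Q hQ)]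

/-- The admissible points in the box `[22 L, 23 L] × [42 L, 44 L]`, on which `-F` is positive of
exact order `L ^ 8`. -/
structure IsAdmissibleAt (L : ℤ) (P : ℤ × ℤ) : Prop extends IsAdmissible P where
  le_fst : 22 * L ≤ P.1
  fst_le : P.1 ≤ 23 * L
  le_snd : 42 * L ≤ P.2
  snd_le : P.2 ≤ 44 * L

/- In the coordinates `2 u - v` and `23 v - 42 u` all coefficients of `-G` are positive. -/
theorem neg_formG_bounds {R : Type*} [CommRing R] [LinearOrder R] [IsStrictOrderedRing R]
    {u v : R} (h₁ : v ≤ 2 * u) (h₂ : 42 * u ≤ 23 * v) :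
    10 ^ 7 * v ^ 6 ≤ -formG u v ∧ -formG u v ≤ 10 ^ 8 * v ^ 6 := by
  obtain ⟨s, hs⟩ : ∃ s, s = 2 * u - v := ⟨_, rfl⟩
  obtain ⟨t, ht⟩ : ∃ t, t = 23 * v - 42 * u := ⟨_, rfl⟩
  have hs₀ : 0 ≤ s := by linarith
  have ht₀ : 0 ≤ t := by linarith
  have hG : 4096 * -formG u v = 175275950392101888 * s ^ 6 + 47194815109800960 * s ^ 5 * t +
      5179575454265088 * s ^ 4 * t ^ 2 + 296349984335360 * s ^ 3 * t ^ 3 +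
      9300540789504 * s ^ 2 * t ^ 4 + 151096453120 * s * t ^ 5 + 984461312 * t ^ 6 := by
    subst hs ht
    unfold formG
    ring
  have hv : 4096 * v ^ 6 = (42 * s + 2 * t) ^ 6 := by
    subst hs ht
    ring
  have hlower : 0 ≤ 4096 * -formG u v - 10 ^ 7 * (4096 * v ^ 6) := by
    rw [hG, hv]
    ring_nf
    positivity
  have hupper : 0 ≤ 10 ^ 8 * (4096 * v ^ 6) - 4096 * -formG u v := by
    rw [hG, hv]
    ring_nf
    positivity
  constructor <;> linarith

namespace IsAdmissibleAt

variable {L : ℤ} {P Q : ℤ × ℤ} (hL : 1 ≤ L) (hP : IsAdmissibleAt L P)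
include hP hL

theorem fst_pos : 0 < P.1 := by linarith [hP.le_fst]

theorem neg_formG_bounds : L ^ 6 ≤ -formG P.1 P.2 ∧ -formG P.1 P.2 ≤ 10 ^ 18 * L ^ 6 := by
  obtain ⟨h₁, h₂⟩ := _root_.neg_formG_bounds (u := P.1) (v := P.2)
    (by linarith [hP.snd_le, hP.le_fst]) (by linarith [hP.le_snd, hP.fst_le])
  have hlower : (42 * L) ^ 6 ≤ P.2 ^ 6 := pow_le_pow_left₀ (by linarith) hP.le_snd 6
  have hupper : P.2 ^ 6 ≤ (44 * L) ^ 6 := pow_le_pow_left₀ (by linarith [hP.le_snd]) hP.snd_le 6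
  have hL6 : 0 ≤ L ^ 6 := by positivity
  rw [mul_pow] at hlower hupper
  constructor <;> linarith

theorem formW_bounds : L ^ 2 ≤ formW P.1 P.2 ∧ formW P.1 P.2 ≤ 10 ^ 4 * L ^ 2 := by
  have hlower : (42 * L) ^ 2 ≤ P.2 ^ 2 := pow_le_pow_left₀ (by linarith) hP.le_snd 2
  have hupper : P.2 ^ 2 ≤ (44 * L) ^ 2 := pow_le_pow_left₀ (by linarith [hP.le_snd]) hP.snd_le 2
  have hupper' : P.1 ^ 2 ≤ (23 * L) ^ 2 := pow_le_pow_left₀ (hP.fst_pos hL).le hP.fst_le 2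
  unfold formW
  constructor <;> nlinarith [sq_nonneg P.1, sq_nonneg L]

theorem neg_formF_bounds : L ^ 8 ≤ -formF P.1 P.2 ∧ -formF P.1 P.2 ≤ 10 ^ 22 * L ^ 8 := by
  obtain ⟨hG₁, hG₂⟩ := hP.neg_formG_bounds hL
  obtain ⟨hW₁, hW₂⟩ := hP.formW_bounds hL
  have hL2 : 0 ≤ L ^ 2 := by positivity
  have hL6 : 0 ≤ L ^ 6 := by positivity
  rw [formF, ← mul_neg]
  constructor
  · calc L ^ 8 = L ^ 2 * L ^ 6 := by ring
      _ ≤ _ := mul_le_mul hW₁ hG₁ hL6 (hL2.trans hW₁)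
  · calc _ ≤ (10 ^ 4 * L ^ 2) * (10 ^ 18 * L ^ 6) :=
        mul_le_mul hW₂ hG₂ (hL6.trans hG₁) (hL2.trans (hW₁.trans hW₂))
      _ = _ := by ring

theorem formF_neg : formF P.1 P.2 < 0 := by
  have hL8 : 0 < L ^ 8 := by positivity
  linarith [(hP.neg_formF_bounds hL).1]

theorem abs_cross_le (hQ : IsAdmissibleAt L Q) : |cross P Q| ≤ 1012 * L ^ 2 := by
  obtain ⟨_, p₁, p₂, p₃, p₄⟩ := hP
  obtain ⟨_, q₁, q₂, q₃, q₄⟩ := hQ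
  have hPQ : P.1 * Q.2 ≤ (23 * L) * (44 * L) := mul_le_mul p₂ q₄ (by linarith) (by linarith)
  have hQP : Q.1 * P.2 ≤ (23 * L) * (44 * L) := mul_le_mul q₂ p₄ (by linarith) (by linarith)
  have hPQ₀ : 0 ≤ P.1 * Q.2 := mul_nonneg (by linarith) (by linarith)
  have hQP₀ : 0 ≤ Q.1 * P.2 := mul_nonneg (by linarith) (by linarith)
  rw [cross, abs_le]
  constructor <;> linarith

end IsAdmissibleAt

variable {L : ℤ} {s : Finset (ℤ × ℤ)}

theorem card_le_of_isPrimePow_dvd_formF (hL : 1 ≤ L) (hs : ∀ P ∈ s, IsAdmissibleAt L P) {n : ℕ}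
    (hn : IsPrimePow n) (hF : ∀ P ∈ s, (n : ℤ) ∣ formF P.1 P.2) :
    (s.card : ℝ) ≤ 8 + 16000 * (L : ℝ) ^ 2 / n := by
  have hfiber : ∀ b ∈ s.image (ratio n),
      ((s.filter (ratio n · = b)).card : ℝ) ≤ (((44 * L : ℤ) : ℝ) ^ 2 / n + 1) := fun b _ ↦ by
    have hmem : ∀ P ∈ s.filter (ratio n · = b), P ∈ s := fun P hP ↦ (Finset.mem_filter.mp hP).1
    refine card_le_of_dvd_cross hn.pos (fun P hP ↦ (hs P (hmem P hP)).isCoprime)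
      (fun P hP ↦ (hs P (hmem P hP)).fst_pos hL)
      (fun P hP ↦ by linarith [(hs P (hmem P hP)).fst_le, (hs P (hmem P hP)).le_snd])
      (fun P hP ↦ (hs P (hmem P hP)).snd_le) fun P hP Q hQ ↦ ?_
    rw [Finset.mem_filter] at hP hQ
    exact dvd_cross_of_ratio_eq ((hs P hP.1).isUnit_snd (hF P hP.1))
      ((hs Q hQ.1).isUnit_snd (hF Q hQ.1)) (hP.2.trans hQ.2.symm)
  have himage : ((s.image (ratio n)).card : ℝ) ≤ 8 := by
    exact_mod_cast card_image_ratio_le hn (fun P hP ↦ (hs P hP).toIsAdmissible) hF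
  calc (s.card : ℝ) = ∑ b ∈ s.image (ratio n), ((s.filter (ratio n · = b)).card : ℝ) := by
        exact_mod_cast Finset.card_eq_sum_card_image (ratio n) s
    _ ≤ (s.image (ratio n)).card * (((44 * L : ℤ) : ℝ) ^ 2 / n + 1) := by
        rw [← nsmul_eq_mul]
        exact Finset.sum_le_card_nsmul _ _ _ hfiber
    _ ≤ 8 * (((44 * L : ℤ) : ℝ) ^ 2 / n + 1) := by gcongr
    _ = 8 + 15488 * ((L : ℝ) ^ 2 / n) := by push_cast; ring
    _ ≤ 8 + 16000 * ((L : ℝ) ^ 2 / n) := by gcongr; norm_num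
    _ = 8 + 16000 * (L : ℝ) ^ 2 / n := by rw [mul_div_assoc]

end AdmissibleAt

section Box

theorem exists_prime_dvd_of_not_isCoprime {a b : ℤ} (h : ¬IsCoprime a b) :
    ∃ p : ℕ, p.Prime ∧ (p : ℤ) ∣ a ∧ (p : ℤ) ∣ b := by
  rw [Int.isCoprime_iff_gcd_eq_one, Int.gcd, ← Nat.coprime_iff_gcd_eq_one,
    Nat.Prime.not_coprime_iff_dvd] at h
  simpa only [Int.natCast_dvd] using h

theorem card_filter_Ico_dvd_mul_add_le {a b m c : ℤ} {q : ℕ} (hab : a ≤ b) (hq : 0 < q)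
    (hm : IsCoprime m q) :
    (((Finset.Ico a b).filter fun x ↦ (q : ℤ) ∣ m * x + c).card : ℝ) ≤ (b - a) / q + 1 := by
  have hq' : (0 : ℤ) < q := by exact_mod_cast hq
  obtain ⟨k, l, hkl⟩ := hm
  have hmod : ∀ x : ℤ, (q : ℤ) ∣ m * x + c → x ≡ -k * c [ZMOD q] := fun x hx ↦ by
    refine (Int.modEq_iff_dvd.mpr ?_).symm
    have h := (hx.mul_left k).add (Dvd.intro (l * x) rfl)
    rwa [show k * (m * x + c) + q * (l * x) = x - -k * c by linear_combination x * hkl] at h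
  have hcard := Int.Ico_filter_modEq_card a b hq' (-k * c)
  have hle : ((⌈((b : ℚ) - (-k * c : ℤ)) / (q : ℤ)⌉ - ⌈((a : ℚ) - (-k * c : ℤ)) / (q : ℤ)⌉ : ℤ) : ℚ)
      ≤ ((b : ℚ) - a) / q + 1 := by
    have h₁ := Int.ceil_lt_add_one (((b : ℚ) - (-k * c : ℤ)) / (q : ℤ))
    have h₂ := Int.le_ceil (((a : ℚ) - (-k * c : ℤ)) / (q : ℤ))
    have h₃ : ((b : ℚ) - a) / q =
        ((b : ℚ) - (-k * c : ℤ)) / (q : ℤ) - ((a : ℚ) - (-k * c : ℤ)) / (q : ℤ) := by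
      push_cast
      ring
    push_cast at *
    linarith
  have hnonneg : 0 ≤ ((b : ℚ) - a) / q + 1 := by
    have hab' : (0 : ℚ) ≤ b - a := sub_nonneg.mpr (mod_cast hab)
    positivity
  have hrat : (((Finset.Ico a b).filter fun x ↦ (q : ℤ) ∣ m * x + c).card : ℚ) ≤
      ((b : ℚ) - a) / q + 1 := by
    calc (((Finset.Ico a b).filter fun x ↦ (q : ℤ) ∣ m * x + c).card : ℚ)
        ≤ ((Finset.Ico a b).filter (· ≡ -k * c [ZMOD q])).card := by
          exact_mod_cast Finset.card_le_card
            (Finset.monotone_filter_right _ fun x _ hx ↦ hmod x hx)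
      _ ≤ ((b : ℚ) - a) / q + 1 := by
          rw [← Int.cast_natCast, hcard, Int.cast_max]
          exact max_le hle (by simpa using hnonneg)
  exact_mod_cast hrat

/-- The parameters `(a, b)` of the points `(M a, M b + 1)` used at scale `N`. -/
noncomputable def parameterBox (N : ℕ) : Finset (ℤ × ℤ) :=
  Finset.Ico (22 * N : ℤ) (23 * N) ×ˢ Finset.Ico (42 * N : ℤ) (44 * N)

theorem card_parameterBox (N : ℕ) : (parameterBox N).card = 2 * N ^ 2 := by
  rw [parameterBox, Finset.card_product, Int.card_Ico, Int.card_Ico,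
    show (23 * (N : ℤ) - 22 * N).toNat = N by omega,
    show (44 * (N : ℤ) - 42 * N).toNat = 2 * N by omega]
  ring

variable {M : ℤ} {N : ℕ}

theorem card_filter_parameterBox_dvd_le {p : ℕ} (hp : 0 < p) (hM : IsCoprime M p) :
    (((parameterBox N).filter fun P ↦ (p : ℤ) ∣ M * P.1 ∧ (p : ℤ) ∣ M * P.2 + 1).card : ℝ) ≤
      6 * (N : ℝ) ^ 2 * ((p : ℝ) ^ 2)⁻¹ + 6 := by
  have h₁ := card_filter_Ico_dvd_mul_add_le (a := 22 * N) (b := 23 * N) (c := 0) (by omega) hp hM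
  have h₂ := card_filter_Ico_dvd_mul_add_le (a := 42 * N) (b := 44 * N) (c := 1) (by omega) hp hM
  simp only [add_zero] at h₁
  rw [parameterBox, Finset.filter_product (fun a : ℤ ↦ (p : ℤ) ∣ M * a)
    fun b ↦ (p : ℤ) ∣ M * b + 1, Finset.card_product, Nat.cast_mul]
  set x : ℝ := N / p with hx
  rw [show (((23 * N : ℤ) : ℝ) - ((22 * N : ℤ) : ℝ)) / p = x by push_cast; rw [hx]; ring] at h₁
  rw [show (((44 * N : ℤ) : ℝ) - ((42 * N : ℤ) : ℝ)) / p = 2 * x by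
    push_cast; rw [hx]; ring] at h₂
  calc _ ≤ (x + 1) * (2 * x + 1) := mul_le_mul h₁ h₂ (by positivity) (by positivity)
    _ ≤ 6 * x ^ 2 + 6 := by nlinarith [sq_nonneg (x - 1)]
    _ = 6 * (N : ℝ) ^ 2 * ((p : ℝ) ^ 2)⁻¹ + 6 := by rw [hx]; ring

theorem exists_prime_mem_Ioc_of_not_isCoprime (hM : 6 ∣ M) {P : ℤ × ℤ}
    (hP : P ∈ parameterBox N) (h : ¬IsCoprime (M * P.1) (M * P.2 + 1)) :
    ∃ p ∈ (Finset.Ioc 4 (23 * N)).filter fun p : ℕ ↦ p.Prime ∧ IsCoprime M p,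
      (p : ℤ) ∣ M * P.1 ∧ (p : ℤ) ∣ M * P.2 + 1 := by
  simp only [parameterBox, Finset.mem_product, Finset.mem_Ico] at hP
  obtain ⟨p, hp, h₁, h₂⟩ := exists_prime_dvd_of_not_isCoprime h
  have hp' : Prime (p : ℤ) := Nat.prime_iff_prime_int.mp hp
  have hpM : ¬(p : ℤ) ∣ M := fun h' ↦
    hp'.not_isUnit (isUnit_of_dvd_one ((Int.dvd_add_right (h'.mul_right _)).mp h₂))
  have hle := Int.le_of_dvd (by omega) ((hp'.dvd_or_dvd h₁).resolve_left hpM)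
  refine ⟨p, Finset.mem_filter.mpr ⟨Finset.mem_Ioc.mpr ⟨?_, by omega⟩, hp,
    ((Prime.coprime_iff_not_dvd hp').mpr hpM).symm⟩, h₁, h₂⟩
  by_contra! hp4
  interval_cases p
  · exact Nat.not_prime_zero hp
  · exact Nat.not_prime_one hp
  · exact hpM ((by norm_num : ((2 : ℕ) : ℤ) ∣ 6).trans hM)
  · exact hpM ((by norm_num : ((3 : ℕ) : ℤ) ∣ 6).trans hM)
  · exact absurd hp (by norm_num)

open Classical in
theorem card_filter_not_isCoprime_le (hM : 6 ∣ M) (hN : 0 < N) :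
    (((parameterBox N).filter fun P ↦ ¬IsCoprime (M * P.1) (M * P.2 + 1)).card : ℝ) ≤
      3 / 2 * (N : ℝ) ^ 2 + 138 * N := by
  set I := (Finset.Ioc 4 (23 * N)).filter fun p : ℕ ↦ p.Prime ∧ IsCoprime M p
  have hsub : (parameterBox N).filter (fun P ↦ ¬IsCoprime (M * P.1) (M * P.2 + 1)) ⊆
      I.biUnion fun p ↦
        (parameterBox N).filter fun P ↦ (p : ℤ) ∣ M * P.1 ∧ (p : ℤ) ∣ M * P.2 + 1 := fun P hP ↦ by
    obtain ⟨hP, hcop⟩ := Finset.mem_filter.mp hP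
    obtain ⟨p, hp, h⟩ := exists_prime_mem_Ioc_of_not_isCoprime hM hP hcop
    exact Finset.mem_biUnion.mpr ⟨p, hp, Finset.mem_filter.mpr ⟨hP, h⟩⟩
  have hterm : ∀ p ∈ I, (((parameterBox N).filter fun P ↦
      (p : ℤ) ∣ M * P.1 ∧ (p : ℤ) ∣ M * P.2 + 1).card : ℝ) ≤
        6 * (N : ℝ) ^ 2 * ((p : ℝ) ^ 2)⁻¹ + 6 := fun p hp ↦
    have hp := (Finset.mem_filter.mp hp).2
    card_filter_parameterBox_dvd_le hp.1.pos hp.2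
  have hsum : ∑ p ∈ Finset.Ioc 4 (23 * N), ((p : ℝ) ^ 2)⁻¹ ≤ 1 / 4 := by
    have h := sum_Ioc_inv_sq_le_sub (α := ℝ) (k := 4) (n := 23 * N) (by norm_num) (by omega)
    have hnonneg : (0 : ℝ) ≤ ((23 * N : ℕ) : ℝ)⁻¹ := by positivity
    push_cast at h hnonneg
    linarith
  have hIoc : ((23 * N - 4 : ℕ) : ℝ) ≤ 23 * N := by exact_mod_cast Nat.sub_le _ _
  calc _ ≤ ∑ p ∈ I, (((parameterBox N).filter fun P ↦
          (p : ℤ) ∣ M * P.1 ∧ (p : ℤ) ∣ M * P.2 + 1).card : ℝ) := by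
        exact_mod_cast (Finset.card_le_card hsub).trans Finset.card_biUnion_le
    _ ≤ ∑ p ∈ I, (6 * (N : ℝ) ^ 2 * ((p : ℝ) ^ 2)⁻¹ + 6) := Finset.sum_le_sum hterm
    _ ≤ ∑ p ∈ Finset.Ioc 4 (23 * N), (6 * (N : ℝ) ^ 2 * ((p : ℝ) ^ 2)⁻¹ + 6) :=
        Finset.sum_le_sum_of_subset_of_nonneg (Finset.filter_subset _ _) fun _ _ _ ↦ by positivity
    _ = 6 * (N : ℝ) ^ 2 * ∑ p ∈ Finset.Ioc 4 (23 * N), ((p : ℝ) ^ 2)⁻¹ +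
          ((23 * N - 4 : ℕ) : ℝ) * 6 := by
        rw [Finset.sum_add_distrib, ← Finset.mul_sum, Finset.sum_const, Nat.card_Ioc, nsmul_eq_mul]
    _ ≤ 6 * (N : ℝ) ^ 2 * (1 / 4) + 23 * N * 6 := by gcongr
    _ = 3 / 2 * (N : ℝ) ^ 2 + 138 * N := by ring

open Classical in
/-- The finite set of admissible points used at scale `N`; see `parameterBox`. -/
noncomputable def admissibleBox (N : ℕ) : Finset (ℤ × ℤ) :=
  ((parameterBox N).filter fun P ↦
    IsCoprime ((badModulus : ℤ) * P.1) (badModulus * P.2 + 1)).image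
      fun P ↦ ((badModulus : ℤ) * P.1, badModulus * P.2 + 1)

theorem badModulus_pos : (0 : ℤ) < badModulus := by norm_num [badModulus]

theorem isAdmissibleAt_of_mem_admissibleBox {P : ℤ × ℤ} (hP : P ∈ admissibleBox N) :
    IsAdmissibleAt (badModulus * N) P := by
  simp only [admissibleBox, parameterBox, Finset.mem_image, Finset.mem_filter, Finset.mem_product,
    Finset.mem_Ico] at hP
  obtain ⟨⟨a, b⟩, ⟨⟨⟨ha, ha'⟩, hb, hb'⟩, hcop⟩, rfl⟩ := hP
  have hM := badModulus_pos
  exact {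
    isCoprime := hcop
    dvd_fst := Dvd.intro _ rfl
    dvd_snd_sub_one := ⟨b, by ring⟩
    le_fst := by linarith [mul_le_mul_of_nonneg_left ha hM.le]
    fst_le := by linarith [mul_le_mul_of_nonneg_left ha'.le hM.le]
    le_snd := by linarith [mul_le_mul_of_nonneg_left hb hM.le]
    snd_le := by
      have hb₁ : b + 1 ≤ 44 * N := hb'
      linarith [mul_le_mul_of_nonneg_left hb₁ hM.le] }

theorem le_card_admissibleBox (hN : 1380 ≤ N) : 2 / 5 * (N : ℝ) ^ 2 ≤ (admissibleBox N).card := by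
  classical
  have hinj : Function.Injective
      fun P : ℤ × ℤ ↦ ((badModulus : ℤ) * P.1, (badModulus : ℤ) * P.2 + 1) := fun P Q h ↦ by
    simp only [Prod.mk.injEq, add_left_inj, mul_right_inj' badModulus_pos.ne'] at h
    exact Prod.ext h.1 h.2
  have hsplit := Finset.card_filter_add_card_filter_not (s := parameterBox N) fun P ↦
    IsCoprime ((badModulus : ℤ) * P.1) (badModulus * P.2 + 1)
  have hbad := card_filter_not_isCoprime_le (M := badModulus) (N := N)
    (by norm_num [badModulus]) (by omega)
  rw [card_parameterBox, ← Finset.card_image_of_injective _ hinj] at hsplit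
  have hsplit' : ((admissibleBox N).card : ℝ) + ((parameterBox N).filter fun P ↦
      ¬IsCoprime ((badModulus : ℤ) * P.1) (badModulus * P.2 + 1)).card = 2 * (N : ℝ) ^ 2 := by
    exact_mod_cast hsplit
  have hN' : (1380 : ℝ) ≤ N := by exact_mod_cast hN
  nlinarith

end Box

section SmoothPart

/-- The part of `m` composed of the primes at most `z`. -/
def smoothPart (z m : ℕ) : ℕ := (m.factorization.filter (· ≤ z)).prod (· ^ ·)

/-- The part of `m` composed of the primes exceeding `z`. -/
def roughPart (z m : ℕ) : ℕ := (m.factorization.filter fun p ↦ ¬p ≤ z).prod (· ^ ·)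

variable {z m : ℕ}

theorem smoothPart_mul_roughPart (hm : m ≠ 0) : smoothPart z m * roughPart z m = m := by
  rw [smoothPart, roughPart, Finsupp.prod_filter_mul_prod_filter_not,
    Nat.prod_factorization_pow_eq_self hm]

theorem roughPart_mul {a b : ℕ} (ha : a ≠ 0) (hb : b ≠ 0) :
    roughPart z (a * b) = roughPart z a * roughPart z b := by
  rw [roughPart, Nat.factorization_mul ha hb, Finsupp.filter_add]
  exact Finsupp.prod_add_index' (fun _ ↦ pow_zero _) fun _ _ _ ↦ pow_add _ _ _

theorem roughPart_dvd (z m : ℕ) : roughPart z m ∣ m := by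
  obtain rfl | hm := eq_or_ne m 0
  · exact dvd_zero _
  · exact Dvd.intro_left _ (smoothPart_mul_roughPart hm)

theorem lt_of_prime_of_dvd_roughPart {p : ℕ} (hp : p.Prime) (h : p ∣ roughPart z m) : z < p := by
  obtain ⟨q, hq, hpq⟩ := (Prime.dvd_finsuppProd_iff hp.prime).mp h
  rw [Finsupp.support_filter, Finset.mem_filter, Nat.support_factorization] at hq
  rw [(Nat.prime_dvd_prime_iff_eq hp (Nat.prime_of_mem_primeFactors hq.1)).mp
    (hp.dvd_of_dvd_pow hpq)]
  exact not_le.mp hq.2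

theorem smoothPart_eq_prod_primesLE (z m : ℕ) :
    smoothPart z m = ∏ p ∈ z.primesLE, p ^ m.factorization p := by
  rw [smoothPart, Finsupp.prod_of_support_subset _ (s := z.primesLE) _ _ fun p _ ↦ pow_zero p]
  · refine Finset.prod_congr rfl fun p hp ↦ ?_
    rw [Finsupp.filter_apply_pos (· ≤ z) _ (Nat.mem_primesLE.mp hp).1]
  · intro p hp
    rw [Finsupp.support_filter, Finset.mem_filter, Nat.support_factorization] at hp
    exact Nat.mem_primesLE.mpr ⟨hp.2, Nat.prime_of_mem_primeFactors hp.1⟩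

theorem log_smoothPart (z m : ℕ) : Real.log (smoothPart z m) =
    ∑ p ∈ z.primesLE, m.factorization p * Real.log p := by
  rw [smoothPart_eq_prod_primesLE, Nat.cast_prod, Real.log_prod]
  · simp only [Nat.cast_pow, Real.log_pow]
  · intro p hp
    exact_mod_cast pow_ne_zero _ (Nat.prime_of_mem_primesLE hp).ne_zero

theorem smoothPart_pos (z m : ℕ) : 0 < smoothPart z m := by
  rw [smoothPart_eq_prod_primesLE]
  exact Finset.prod_pos fun p hp ↦ pow_pos (Nat.prime_of_mem_primesLE hp).pos _

theorem smoothPart_le (hm : m ≠ 0) : smoothPart z m ≤ m :=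
  Nat.le_of_dvd (Nat.pos_of_ne_zero hm) (Dvd.intro _ (smoothPart_mul_roughPart hm))

theorem sum_log_primesLE_le (n : ℕ) : ∑ p ∈ n.primesLE, Real.log p ≤ Real.log 4 * n := by
  rw [← Chebyshev.theta_eq_sum_primesLE_log]
  exact Chebyshev.theta_le_log4_mul_x n.cast_nonneg

theorem div_le_factorization_factorial {n p : ℕ} (hp : p.Prime) :
    n / p ≤ (n.factorial).factorization p := by
  have hlog : Nat.log p n < Nat.log p n + 2 := by omega
  rw [Nat.factorization_factorial hp hlog]
  simpa only [pow_one] using Finset.single_le_sum (f := fun i ↦ n / p ^ i)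
    (fun _ _ ↦ Nat.zero_le _) (show 1 ∈ Finset.Ico 1 (Nat.log p n + 2) from
      Finset.mem_Ico.mpr ⟨le_rfl, by omega⟩)

/-- The upper bound in the first theorem of Mertens, read off from `n! ≤ n ^ n`. -/
theorem sum_log_div_primesLE_le {n : ℕ} (hn : 0 < n) :
    ∑ p ∈ n.primesLE, Real.log p / p ≤ Real.log n + Real.log 4 := by
  have hn' : (0 : ℝ) < n := by exact_mod_cast hn
  have hfac : ∑ p ∈ n.primesLE, ((n / p : ℕ) : ℝ) * Real.log p ≤ n * Real.log n :=
    calc ∑ p ∈ n.primesLE, ((n / p : ℕ) : ℝ) * Real.log p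
        ≤ ∑ p ∈ n.primesLE, (n.factorial.factorization p : ℝ) * Real.log p := by
          gcongr with p hp
          exact div_le_factorization_factorial (Nat.prime_of_mem_primesLE hp)
      _ = Real.log (smoothPart n n.factorial) := (log_smoothPart _ _).symm
      _ ≤ Real.log ((n : ℝ) ^ n) := by
          refine Real.log_le_log (mod_cast smoothPart_pos _ _) ?_
          exact_mod_cast (smoothPart_le n.factorial_ne_zero).trans n.factorial_le_pow
      _ = n * Real.log n := Real.log_pow _ _
  refine le_of_mul_le_mul_left ?_ hn'
  calc n * ∑ p ∈ n.primesLE, Real.log p / p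
      = ∑ p ∈ n.primesLE, (n / p : ℝ) * Real.log p := by
        rw [Finset.mul_sum]
        exact Finset.sum_congr rfl fun p _ ↦ by ring
    _ ≤ ∑ p ∈ n.primesLE, (((n / p : ℕ) : ℝ) + 1) * Real.log p := by
        gcongr with p
        rw [← Nat.floor_div_eq_div (K := ℝ)]
        exact (Nat.lt_floor_add_one _).le
    _ = ∑ p ∈ n.primesLE, ((n / p : ℕ) : ℝ) * Real.log p + ∑ p ∈ n.primesLE, Real.log p := by
        rw [← Finset.sum_add_distrib]
        exact Finset.sum_congr rfl fun p _ ↦ by ring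
    _ ≤ n * Real.log n + Real.log 4 * n := add_le_add hfac (sum_log_primesLE_le n)
    _ = n * (Real.log n + Real.log 4) := by ring

theorem sum_Ico_one_div_pow_le {x : ℝ} (hx : 2 ≤ x) (J : ℕ) :
    ∑ j ∈ Finset.Ico 1 J, 1 / x ^ j ≤ 2 / x := by
  have hx₀ : 0 < x := by linarith
  have hinv : x⁻¹ ≤ 1 / 2 := by
    rw [inv_eq_one_div]
    exact one_div_le_one_div_of_le two_pos hx
  simp only [one_div, ← inv_pow]
  calc ∑ j ∈ Finset.Ico 1 J, x⁻¹ ^ j ≤ x⁻¹ ^ 1 / (1 - x⁻¹) :=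
        geom_sum_Ico_le_of_lt_one (inv_nonneg.mpr hx₀.le) (by linarith)
    _ ≤ x⁻¹ / (1 / 2) := by
        rw [pow_one]
        gcongr
        linarith
    _ = 2 / x := by ring

theorem factorization_eq_sum_ite {J n p : ℕ} (hp : p.Prime) (hn : n ≠ 0) (hJ : n < 2 ^ J) :
    n.factorization p = ∑ j ∈ Finset.Ico 1 J, if p ^ j ∣ n then 1 else 0 := by
  rw [Nat.factorization_eq_card_pow_dvd_of_lt hp (Nat.pos_of_ne_zero hn)
    (hJ.trans_le (Nat.pow_le_pow_left hp.two_le J)), Finset.card_filter]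

variable {ι : Type*} {s : Finset ι} {f : ι → ℕ} {J : ℕ} {A B : ℝ}

theorem sum_factorization_le (hf₀ : ∀ x ∈ s, f x ≠ 0) (hfJ : ∀ x ∈ s, f x < 2 ^ J) (hA : 0 ≤ A)
    (hB : 0 ≤ B) {p : ℕ} (hp : p.Prime)
    (hs : ∀ j, 0 < j → ((s.filter fun x ↦ p ^ j ∣ f x).card : ℝ) ≤ A + B / (p : ℝ) ^ j) :
    ∑ x ∈ s, ((f x).factorization p : ℝ) ≤ A * J + 2 * B / p := by
  calc ∑ x ∈ s, ((f x).factorization p : ℝ)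
      = ∑ x ∈ s, ∑ j ∈ Finset.Ico 1 J, if p ^ j ∣ f x then 1 else 0 := by
        refine Finset.sum_congr rfl fun x hx ↦ ?_
        rw [factorization_eq_sum_ite hp (hf₀ x hx) (hfJ x hx)]
        push_cast
        rfl
    _ = ∑ j ∈ Finset.Ico 1 J, ((s.filter fun x ↦ p ^ j ∣ f x).card : ℝ) := by
        rw [Finset.sum_comm]
        simp only [Finset.sum_boole]
    _ ≤ ∑ j ∈ Finset.Ico 1 J, (A + B * (1 / (p : ℝ) ^ j)) := by
        refine Finset.sum_le_sum fun j hj ↦ ?_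
        rw [mul_one_div]
        exact hs j (Finset.mem_Ico.mp hj).1
    _ = A * (J - 1 : ℕ) + B * ∑ j ∈ Finset.Ico 1 J, 1 / (p : ℝ) ^ j := by
        rw [Finset.sum_add_distrib, Finset.sum_const, Nat.card_Ico, nsmul_eq_mul, ← Finset.mul_sum,
          mul_comm A]
    _ ≤ A * J + B * (2 / p) := by
        gcongr
        · exact Nat.sub_le _ _
        · exact sum_Ico_one_div_pow_le (mod_cast hp.two_le) J
    _ = A * J + 2 * B / p := by ring

theorem sum_log_smoothPart_le (hf₀ : ∀ x ∈ s, f x ≠ 0) (hfJ : ∀ x ∈ s, f x < 2 ^ J) (hA : 0 ≤ A)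
    (hB : 0 ≤ B) (hz : 0 < z)
    (hs : ∀ p j : ℕ, p.Prime → 0 < j →
      ((s.filter fun x ↦ p ^ j ∣ f x).card : ℝ) ≤ A + B / (p : ℝ) ^ j) :
    ∑ x ∈ s, Real.log (smoothPart z (f x)) ≤
      A * J * (Real.log 4 * z) + 2 * B * (Real.log z + Real.log 4) := by
  simp only [log_smoothPart]
  rw [Finset.sum_comm]
  calc ∑ p ∈ z.primesLE, ∑ x ∈ s, ((f x).factorization p : ℝ) * Real.log p
      ≤ ∑ p ∈ z.primesLE, (A * J + 2 * B / p) * Real.log p := by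
        refine Finset.sum_le_sum fun p hp ↦ ?_
        have hp := Nat.prime_of_mem_primesLE hp
        rw [← Finset.sum_mul]
        gcongr
        exact sum_factorization_le hf₀ hfJ hA hB hp fun j hj ↦ hs p j hp hj
    _ = A * J * ∑ p ∈ z.primesLE, Real.log p + 2 * B * ∑ p ∈ z.primesLE, Real.log p / p := by
        rw [Finset.mul_sum, Finset.mul_sum, ← Finset.sum_add_distrib]
        exact Finset.sum_congr rfl fun p _ ↦ by ring
    _ ≤ A * J * (Real.log 4 * z) + 2 * B * (Real.log z + Real.log 4) := by
        gcongr
        · exact sum_log_primesLE_le z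
        · exact sum_log_div_primesLE_le hz

end SmoothPart

section DividedDifference

variable {F ι : Type*} [Field F] [DecidableEq ι] {s : Finset ι} {x y : ι → F}

/-- The divided difference, of order one less than the number of nodes, of the values `y i` at the
nodes `x i` for `i ∈ s`. -/
def dividedDifference (s : Finset ι) (x y : ι → F) : F :=
  ∑ i ∈ s, y i / ∏ j ∈ s.erase i, (x i - x j)

theorem coeff_interpolate (hx : Set.InjOn x s) :
    (Lagrange.interpolate s x y).coeff (s.card - 1) = dividedDifference s x y := by
  rw [Lagrange.coeff_eq_sum hx (Lagrange.degree_interpolate_lt y hx), dividedDifference]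
  refine Finset.sum_congr rfl fun i hi ↦ ?_
  rw [Lagrange.eval_interpolate_at_node y hx hi]

theorem dividedDifference_congr {x' y' : ι → F} (hx : ∀ i ∈ s, x i = x' i)
    (hy : ∀ i ∈ s, y i = y' i) : dividedDifference s x y = dividedDifference s x' y' :=
  Finset.sum_congr rfl fun i hi ↦ by
    rw [hy i hi, Finset.prod_congr rfl fun j hj ↦ by
      rw [hx i hi, hx j (Finset.mem_of_mem_erase hj)]]

theorem dividedDifference_mul (s : Finset ι) (x y : ι → F) (c d : F) :
    dividedDifference s (fun i ↦ c * x i) (fun i ↦ d * y i) =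
      d / c ^ (s.card - 1) * dividedDifference s x y := by
  rw [dividedDifference, dividedDifference, Finset.mul_sum]
  refine Finset.sum_congr rfl fun i hi ↦ ?_
  simp only [← mul_sub, Finset.prod_mul_distrib, Finset.prod_const, Finset.card_erase_of_mem hi,
    mul_div_mul_comm]

theorem degree_interpolate_lt_of_dividedDifference_eq_zero {n : ℕ} (hs : s.card = n + 1)
    (hx : Set.InjOn x s) (h : dividedDifference s x y = 0) :
    (Lagrange.interpolate s x y).degree < n := by
  have hdeg : (Lagrange.interpolate s x y).degree < ((n + 1 : ℕ) : WithBot ℕ) :=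
    hs ▸ Lagrange.degree_interpolate_lt y hx
  rw [← coeff_interpolate hx, hs] at h
  rw [Polynomial.degree_lt_iff_coeff_zero] at hdeg ⊢
  intro m hm
  obtain rfl | hlt := hm.eq_or_lt
  · exact h
  · exact hdeg m hlt

theorem exists_polynomial_of_dividedDifference_eq_zero {n : ℕ} (hx : Set.InjOn x s)
    (h : ∀ t ⊆ s, t.card = n + 1 → dividedDifference t x y = 0) :
    ∃ r : Polynomial F, r.degree < n ∧ ∀ i ∈ s, r.eval (x i) = y i := by
  obtain hsn | hns := le_total s.card n
  · exact ⟨Lagrange.interpolate s x y,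
      (Lagrange.degree_interpolate_lt y hx).trans_le (by exact_mod_cast hsn),
      fun i hi ↦ Lagrange.eval_interpolate_at_node y hx hi⟩
  obtain ⟨t, hts, rfl⟩ := Finset.exists_subset_card_eq hns
  have hxt : Set.InjOn x t := hx.mono hts
  refine ⟨Lagrange.interpolate t x y, Lagrange.degree_interpolate_lt y hxt, fun i hi ↦ ?_⟩
  by_cases hit : i ∈ t
  · exact Lagrange.eval_interpolate_at_node y hxt hit
  have hsub : insert i t ⊆ s := Finset.insert_subset hi hts
  have hxi : Set.InjOn x (insert i t : Finset ι) := hx.mono hsub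
  have hcard := Finset.card_insert_of_notMem hit
  have hagree : Lagrange.interpolate t x y = Lagrange.interpolate (insert i t) x y :=
    Polynomial.eq_of_degrees_lt_of_eval_index_eq t hxt (Lagrange.degree_interpolate_lt y hxt)
      (degree_interpolate_lt_of_dividedDifference_eq_zero hcard hxi (h _ hsub hcard))
      fun j hj ↦ by
        rw [Lagrange.eval_interpolate_at_node y hxt hj,
          Lagrange.eval_interpolate_at_node y hxi (Finset.mem_insert_of_mem hj)]
  rw [hagree, Lagrange.eval_interpolate_at_node y hxi (Finset.mem_insert_self i t)]

end DividedDifference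

section MeanValue

theorem continuousAt_iteratedDeriv {f : ℝ → ℝ} {x : ℝ} {k n : ℕ} (hf : ContDiffAt ℝ n f x)
    (hk : k ≤ n) : ContinuousAt (iteratedDeriv k f) x := by
  rw [iteratedDeriv_eq_equiv_comp]
  exact (LinearIsometryEquiv.continuous _).continuousAt.comp
    (hf.continuousAt_iteratedFDeriv (by exact_mod_cast hk))

theorem exists_finset_deriv_eq_zero {f : ℝ → ℝ} {a b : ℝ} (hf : ContinuousOn f (Set.Icc a b))
    {n : ℕ} {s : Finset ℝ} (hn : s.card = n + 1) (hs : ∀ x ∈ s, x ∈ Set.Icc a b ∧ f x = 0) :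
    ∃ t : Finset ℝ, t.card = n ∧ ∀ x ∈ t, x ∈ Set.Icc a b ∧ deriv f x = 0 := by
  let x := s.orderEmbOfFin hn
  have hx (i : Fin (n + 1)) : x i ∈ Set.Icc a b ∧ f (x i) = 0 :=
    hs _ (s.orderEmbOfFin_mem hn i)
  have hrolle (i : Fin n) : ∃ ξ ∈ Set.Ioo (x i.castSucc) (x i.succ), deriv f ξ = 0 :=
    exists_deriv_eq_zero (x.strictMono i.castSucc_lt_succ)
      (hf.mono (Set.Icc_subset_Icc (hx _).1.1 (hx _).1.2)) ((hx _).2.trans (hx _).2.symm)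
  choose ξ hξ hξ₀ using hrolle
  have hmono : StrictMono ξ := fun i j hij ↦ calc
    ξ i < x i.succ := (hξ i).2
    _ ≤ x j.castSucc := x.monotone (Fin.succ_le_castSucc_iff.mpr hij)
    _ < ξ j := (hξ j).1
  refine ⟨Finset.univ.map ⟨ξ, hmono.injective⟩, by simp, fun y hy ↦ ?_⟩
  obtain ⟨i, -, rfl⟩ := Finset.mem_map.mp hy
  exact ⟨⟨(hx _).1.1.trans (hξ i).1.le, (hξ i).2.le.trans (hx _).1.2⟩, hξ₀ i⟩

theorem exists_iteratedDeriv_eq_zero {f : ℝ → ℝ} {a b : ℝ} {n : ℕ}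
    (hf : ∀ k < n, ContinuousOn (iteratedDeriv k f) (Set.Icc a b)) {s : Finset ℝ}
    (hn : s.card = n + 1) (hs : ∀ x ∈ s, x ∈ Set.Icc a b ∧ f x = 0) :
    ∃ ξ ∈ Set.Icc a b, iteratedDeriv n f ξ = 0 := by
  have hzeros : ∀ k ≤ n, ∃ t : Finset ℝ, t.card = n - k + 1 ∧
      ∀ x ∈ t, x ∈ Set.Icc a b ∧ iteratedDeriv k f x = 0 := fun k ↦ by
    induction k with
    | zero => exact fun _ ↦ ⟨s, hn, by simpa only [iteratedDeriv_zero] using hs⟩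
    | succ k ih =>
      intro hk
      obtain ⟨t, ht, htf⟩ := ih (by omega)
      rw [iteratedDeriv_succ]
      exact exists_finset_deriv_eq_zero (hf k hk) (by omega) htf
  obtain ⟨t, ht, htf⟩ := hzeros n le_rfl
  obtain ⟨ξ, hξ⟩ := Finset.card_pos.mp (by omega : 0 < t.card)
  exact ⟨ξ, htf ξ hξ⟩

theorem iteratedDeriv_polynomial_eval (p : Polynomial ℝ) (n : ℕ) :
    iteratedDeriv n (fun x ↦ p.eval x) = fun x ↦ (Polynomial.derivative^[n] p).eval x := by
  induction n with
  | zero => simp only [iteratedDeriv_zero, Function.iterate_zero_apply]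
  | succ n ih =>
    rw [iteratedDeriv_succ, ih, Function.iterate_succ_apply']
    exact funext fun x ↦ Polynomial.deriv _

theorem iterate_derivative_eq_C {R : Type*} [Semiring R] {p : Polynomial R} {n : ℕ}
    (hp : p.natDegree ≤ n) :
    Polynomial.derivative^[n] p = Polynomial.C (n.factorial • p.coeff n) := by
  have hdeg := p.natDegree_iterate_derivative n
  rw [Polynomial.eq_C_of_natDegree_eq_zero (p := Polynomial.derivative^[n] p) (by omega),
    Polynomial.coeff_iterate_derivative,
    zero_add, Nat.descFactorial_self]

theorem exists_dividedDifference_eq_iteratedDeriv {ι : Type*} [DecidableEq ι] {s : Finset ι}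
    {x : ι → ℝ} {f : ℝ → ℝ} {a b : ℝ} {n : ℕ} (hn : s.card = n + 1) (hx : Set.InjOn x s)
    (hs : ∀ i ∈ s, x i ∈ Set.Icc a b) (hf : ∀ t ∈ Set.Icc a b, ContDiffAt ℝ n f t) :
    ∃ ξ ∈ Set.Icc a b,
      dividedDifference s x (fun i ↦ f (x i)) = iteratedDeriv n f ξ / n.factorial := by
  let p : Polynomial ℝ := Lagrange.interpolate s x fun i ↦ f (x i)
  have hp {t : ℝ} {k : ℕ} : ContDiffAt ℝ k (fun x ↦ p.eval x) t := by
    simpa only [Polynomial.coe_aeval_eq_eval] using (p.contDiff_aeval (𝕜 := ℝ) k).contDiffAt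
  have hdeg : p.natDegree ≤ n := by
    have := Polynomial.natDegree_le_of_degree_le
      (Lagrange.degree_interpolate_le (r := fun i ↦ f (x i)) hx)
    rwa [hn, Nat.add_sub_cancel] at this
  have hcont : ∀ k < n, ContinuousOn (iteratedDeriv k (fun x ↦ f x - p.eval x)) (Set.Icc a b) :=
    fun k hk t ht ↦ (continuousAt_iteratedDeriv ((hf t ht).sub hp) hk.le).continuousWithinAt
  obtain ⟨ξ, hξ, h₀⟩ := exists_iteratedDeriv_eq_zero hcont
    (s := s.image x) (by rw [Finset.card_image_of_injOn hx, hn])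
    (Finset.forall_mem_image.mpr fun i hi ↦ ⟨hs i hi, by
      rw [Lagrange.eval_interpolate_at_node _ hx hi, sub_self]⟩)
  refine ⟨ξ, hξ, ?_⟩
  rw [iteratedDeriv_fun_sub (hf ξ hξ) hp, iteratedDeriv_polynomial_eval,
    iterate_derivative_eq_C hdeg] at h₀
  simp only [Polynomial.eval_C, sub_eq_zero] at h₀
  rw [h₀, nsmul_eq_mul, mul_div_cancel_left₀ _ (by positivity), ← coeff_interpolate hx, hn,
    Nat.add_sub_cancel]

end MeanValue

section IntegerNodes

theorem exists_intCast_eq_prod_mul_dividedDifference (s : Finset ℤ) (f : ℤ → ℤ) :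
    ∃ z : ℤ, ((∏ i ∈ s, ∏ j ∈ s.erase i, (i - j) : ℤ) : ℝ) *
      dividedDifference s (fun i ↦ (i : ℝ)) (fun i ↦ (f i : ℝ)) = z := by
  refine ⟨∑ i ∈ s, f i * ∏ k ∈ s.erase i, ∏ j ∈ s.erase k, (k - j), ?_⟩
  rw [dividedDifference, Finset.mul_sum, Int.cast_sum]
  refine Finset.sum_congr rfl fun i hi ↦ ?_
  have hne : ∏ j ∈ s.erase i, ((i : ℝ) - j) ≠ 0 := Finset.prod_ne_zero_iff.mpr fun j hj ↦
    sub_ne_zero.mpr (by exact_mod_cast (Finset.ne_of_mem_erase hj).symm)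
  rw [← Finset.mul_prod_erase s _ hi]
  push_cast
  field_simp

theorem dividedDifference_eq_zero_of_lt {s : Finset ℤ} {f : ℤ → ℤ} {H : ℤ} {n : ℕ}
    (hn : s.card = n + 1) (hH : ∀ i ∈ s, ∀ j ∈ s, |i - j| ≤ H)
    (h : (H : ℝ) ^ (n * (n + 1)) *
      |dividedDifference s (fun i ↦ (i : ℝ)) (fun i ↦ (f i : ℝ))| < 1) :
    dividedDifference s (fun i ↦ (i : ℝ)) (fun i ↦ (f i : ℝ)) = 0 := by
  obtain ⟨z, hz⟩ := exists_intCast_eq_prod_mul_dividedDifference s f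
  have hprod : |∏ i ∈ s, ∏ j ∈ s.erase i, (i - j)| ≤ H ^ (n * (n + 1)) := calc
    _ = ∏ i ∈ s, ∏ j ∈ s.erase i, |i - j| := by simp only [Finset.abs_prod]
    _ ≤ ∏ i ∈ s, ∏ _j ∈ s.erase i, H := Finset.prod_le_prod
      (fun _ _ ↦ Finset.prod_nonneg fun _ _ ↦ abs_nonneg _) fun i hi ↦
        Finset.prod_le_prod (fun _ _ ↦ abs_nonneg _) fun j hj ↦
          hH i hi j (Finset.mem_of_mem_erase hj)
    _ = ∏ _i ∈ s, H ^ n := Finset.prod_congr rfl fun i hi ↦ by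
      rw [Finset.prod_const, Finset.card_erase_of_mem hi, hn, Nat.add_sub_cancel]
    _ = H ^ (n * (n + 1)) := by rw [Finset.prod_const, hn, pow_mul]
  have hz₀ : z = 0 := by
    rw [← Int.abs_lt_one_iff]
    have : |(z : ℝ)| < 1 := by
      rw [← hz, abs_mul]
      exact (mul_le_mul_of_nonneg_right (by exact_mod_cast hprod) (abs_nonneg _)).trans_lt h
    exact_mod_cast this
  rw [hz₀, Int.cast_zero] at hz
  refine (mul_eq_zero.mp hz).resolve_left ?_
  rw [← ne_eq, Int.cast_ne_zero, Finset.prod_ne_zero_iff]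
  exact fun i _ ↦ Finset.prod_ne_zero_iff.mpr fun j hj ↦
    sub_ne_zero.mpr (Finset.ne_of_mem_erase hj).symm

end IntegerNodes

section FewPoints

open Polynomial in
theorem card_le_six_of_neg_formG_eq {v k : ℝ} (hk : 0 < k) {r : ℝ[X]} (hr : r.degree < 4)
    {s : Finset ℝ} (hs : ∀ u ∈ s, -formG u v = k * r.eval u ^ 2) : s.card ≤ 6 := by
  let p : ℝ[X] := formG X (C v) + C k * r ^ 2
  have hr₃ : r.natDegree ≤ 3 := by
    rw [natDegree_le_iff_degree_le]
    exact Order.lt_succ_iff.mp hr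
  have hr₆ : (r ^ 2).natDegree ≤ 6 := natDegree_pow_le_of_le 2 hr₃
  have hG : (formG X (C v)).natDegree ≤ 6 := by
    unfold formG
    compute_degree
  have hGc : (formG X (C v)).coeff 6 = 13601688912 := by
    unfold formG
    simp only [← C_pow]
    compute_degree!
  have heval (u : ℝ) : (formG X (C v)).eval u = formG u v := by
    simp only [formG, eval_add, eval_sub, eval_mul, eval_neg, eval_pow, eval_X, eval_C, eval_ofNat]
  have hcoeff : p.coeff 6 = 13601688912 + k * r.coeff 3 ^ 2 := by
    rw [coeff_add, coeff_C_mul, hGc, coeff_pow_of_natDegree_le hr₃]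
  have hp : p ≠ 0 := fun h ↦ by
    rw [h, coeff_zero] at hcoeff
    nlinarith [sq_nonneg (r.coeff 3)]
  refine (Finset.card_le_card fun u hu ↦ ?_).trans (p.roots.toFinset_card_le.trans
    ((card_roots' p).trans (natDegree_add_le_of_degree_le hG ((natDegree_C_mul_le _ _).trans hr₆))))
  rw [Multiset.mem_toFinset, mem_roots hp, IsRoot, eval_add, eval_C_mul, eval_pow, heval,
    ← hs u hu, add_neg_cancel]

theorem neg_formG_eq_mul_sq_sqrt {u v : ℝ} (hv : 0 < v) (h₁ : v ≤ 2 * u) (h₂ : 42 * u ≤ 23 * v) :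
    -formG u v = (v ^ 3 * √(-formG (u / v) 1)) ^ 2 := by
  have hG := (neg_formG_bounds h₁ h₂).1
  have hscale : -formG u v = v ^ 6 * -formG (u / v) 1 := by
    unfold formG
    field_simp
  have hnonneg : 0 ≤ -formG (u / v) 1 :=
    nonneg_of_mul_nonneg_right (hscale ▸ hG.trans' (by positivity)) (by positivity)
  rw [mul_pow, Real.sq_sqrt hnonneg, hscale]
  ring

theorem exists_abs_dividedDifference_sqrt_neg_formG_le : ∃ C : ℝ, 0 < C ∧
    ∀ {ι : Type} [DecidableEq ι] {s : Finset ι} {x : ι → ℝ}, s.card = 5 → Set.InjOn x s →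
      (∀ i ∈ s, x i ∈ Set.Icc (1 / 2) (23 / 42)) →
        |dividedDifference s x (fun i ↦ √(-formG (x i) 1))| ≤ C := by
  have hsmooth : ∀ t ∈ Set.Icc (1 / 2 : ℝ) (23 / 42),
      ContDiffAt ℝ (4 : ℕ) (fun t ↦ √(-formG t 1)) t := fun t ht ↦ by
    have hpos := (neg_formG_bounds (u := t) (v := 1) (by linarith [ht.1]) (by linarith [ht.2])).1
    refine ContDiffAt.sqrt ?_ (by linarith)
    unfold formG
    fun_prop
  obtain ⟨C, hC⟩ := isCompact_Icc.exists_bound_of_continuousOn fun t ht ↦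
    (continuousAt_iteratedDeriv (hsmooth t ht) le_rfl).continuousWithinAt
  refine ⟨max C 1, by positivity, fun hs hx hmem ↦ ?_⟩
  obtain ⟨ξ, hξ, h⟩ := exists_dividedDifference_eq_iteratedDeriv hs hx hmem hsmooth
  rw [h, abs_div, Nat.abs_cast]
  exact (div_le_self (abs_nonneg _) (by exact_mod_cast Nat.factorial_pos 4)).trans
    ((hC ξ hξ).trans (le_max_left _ _))

theorem exists_abs_dividedDifference_le_of_neg_formG_eq : ∃ C : ℝ, 0 < C ∧
    ∀ {s : Finset ℤ} {k v : ℝ} {y : ℤ → ℝ}, s.card = 5 → 1 ≤ k → 0 < v →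
      (∀ u ∈ s, v ≤ 2 * u ∧ 42 * u ≤ 23 * v) →
      (∀ u ∈ s, 0 ≤ y u ∧ -formG (u : ℝ) v = k * y u ^ 2) →
      |dividedDifference s (fun u ↦ (u : ℝ)) y| ≤ C / v := by
  obtain ⟨C, hC₀, hC⟩ := exists_abs_dividedDifference_sqrt_neg_formG_le
  refine ⟨C, hC₀, fun {s k v y} hcard hk hv hs hy ↦ ?_⟩
  have hk₁ : 1 ≤ √k := Real.one_le_sqrt.mpr hk
  have hyu : ∀ u ∈ s, y u = v ^ 3 / √k * √(-formG (u / v) 1) := fun u hu ↦ by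
    obtain ⟨hy₀, hG⟩ := hy u hu
    rw [div_mul_eq_mul_div, eq_div_iff (by positivity)]
    refine (sq_eq_sq₀ (by positivity) (by positivity)).mp ?_
    rw [← neg_formG_eq_mul_sq_sqrt hv (hs u hu).1 (hs u hu).2, hG, mul_pow,
      Real.sq_sqrt (by positivity), mul_comm]
  have hbound := hC hcard (x := fun u : ℤ ↦ u / v)
    (fun u _ u' _ h ↦ by exact_mod_cast (div_left_inj' hv.ne').mp h) fun u hu ↦ by
      constructor
      · rw [le_div_iff₀ hv]
        linarith [(hs u hu).1]
      · rw [div_le_iff₀ hv]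
        linarith [(hs u hu).2]
  rw [dividedDifference_congr (x' := fun u : ℤ ↦ v * (u / v))
    (y' := fun u : ℤ ↦ v ^ 3 / √k * √(-formG (u / v) 1))
    (fun u _ ↦ (mul_div_cancel₀ (u : ℝ) hv.ne').symm) hyu, dividedDifference_mul, abs_mul, hcard,
    abs_of_nonneg (by positivity)]
  calc _ ≤ v ^ 3 / √k / v ^ (5 - 1) * C := by gcongr
    _ = C / v / √k := by field_simp
    _ ≤ C / v := div_le_self (by positivity) hk₁

/- The determinant method of Bombieri and Pila: on a short interval `|m| = √(-G(u, v) / k)` is so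
close to a cubic polynomial in `u` that the fourth divided differences of the integers `|m|`
vanish. -/
theorem exists_card_le_six_of_neg_formG_eq : ∃ C : ℝ, 0 < C ∧
    ∀ {s : Finset ℤ} {k v H : ℤ}, 0 < k → (∀ u ∈ s, v ≤ 2 * u ∧ 42 * u ≤ 23 * v) →
      (∀ u ∈ s, ∀ u' ∈ s, |u - u'| ≤ H) → C * H ^ 20 < v →
        (∀ u ∈ s, ∃ m, -formG u v = k * m ^ 2) → s.card ≤ 6 := by
  obtain ⟨C, hC₀, hC⟩ := exists_abs_dividedDifference_le_of_neg_formG_eq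
  refine ⟨C, hC₀, fun {s k v H} hk hs hH hv hm ↦ ?_⟩
  have hv₀ : (0 : ℝ) < v := hv.trans_le' (by positivity)
  choose! m hm using hm
  have hm' : ∀ u ∈ s, -formG (u : ℝ) v = k * ((|m u| : ℤ) : ℝ) ^ 2 := fun u hu ↦ by
    exact_mod_cast (sq_abs (m u)).symm ▸ hm u hu
  have hzero : ∀ t ⊆ s, t.card = 4 + 1 →
      dividedDifference t (fun u ↦ (u : ℝ)) (fun u ↦ ((|m u| : ℤ) : ℝ)) = 0 := fun t ht hcard ↦ by
    refine dividedDifference_eq_zero_of_lt hcard (fun i hi j hj ↦ hH i (ht hi) j (ht hj)) ?_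
    have hdd := hC (y := fun u ↦ ((|m u| : ℤ) : ℝ)) (k := k) (v := v) hcard
      (by exact_mod_cast hk) hv₀ (fun u hu ↦ by exact_mod_cast hs u (ht hu))
      fun u hu ↦ ⟨by exact_mod_cast abs_nonneg (m u), hm' u (ht hu)⟩
    calc _ ≤ (H : ℝ) ^ (4 * (4 + 1)) * (C / v) :=
        mul_le_mul_of_nonneg_left hdd (Even.pow_nonneg (by decide) _)
      _ = C * H ^ 20 / v := by ring
      _ < 1 := (div_lt_one hv₀).mpr hv
  obtain ⟨r, hr, hrm⟩ := exists_polynomial_of_dividedDifference_eq_zero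
    Int.cast_injective.injOn hzero
  rw [← Finset.card_map ⟨((↑) : ℤ → ℝ), Int.cast_injective⟩]
  refine card_le_six_of_neg_formG_eq (by exact_mod_cast hk : (0 : ℝ) < k) hr (v := v) fun x hx ↦ ?_
  obtain ⟨u, hu, rfl⟩ := Finset.mem_map.mp hx
  rw [Function.Embedding.coeFn_mk, hm' u hu, hrm u hu]

theorem abs_sub_le_of_ediv_eq_ediv {a b H : ℤ} (hH : 0 < H) (h : a / H = b / H) :
    |a - b| ≤ H := by
  have ha := Int.mul_ediv_add_emod a H
  have hb := Int.mul_ediv_add_emod b H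
  rw [h] at ha
  rw [abs_le]
  constructor <;> linarith [Int.emod_lt_of_pos a hH, Int.emod_lt_of_pos b hH,
    Int.emod_nonneg a hH.ne', Int.emod_nonneg b hH.ne']

theorem exists_card_le_six_of_isAdmissibleAt : ∃ C : ℝ, 0 < C ∧
    ∀ {L H k v : ℤ} {s : Finset (ℤ × ℤ)}, 1 ≤ L → 0 < k → C * H ^ 20 < L →
      (∀ P ∈ s, IsAdmissibleAt L P ∧ P.2 = v ∧ ∃ m, -formG P.1 P.2 = k * m ^ 2) →
      (∀ P ∈ s, ∀ Q ∈ s, |P.1 - Q.1| ≤ H) → s.card ≤ 6 := by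
  obtain ⟨C, hC₀, hC⟩ := exists_card_le_six_of_neg_formG_eq
  refine ⟨C, hC₀, fun {L H k v s} hL hk hLH hs hH ↦ ?_⟩
  obtain rfl | ⟨P₀, hP₀⟩ := s.eq_empty_or_nonempty
  · exact Nat.zero_le 6
  have hLv : L ≤ v := (hs P₀ hP₀).2.1 ▸ by linarith [(hs P₀ hP₀).1.le_snd]
  have hinj : Set.InjOn Prod.fst (s : Set (ℤ × ℤ)) := fun P hP Q hQ h ↦
    Prod.ext h ((hs P hP).2.1.trans (hs Q hQ).2.1.symm)
  rw [← Finset.card_image_of_injOn hinj]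
  refine hC (v := v) hk (Finset.forall_mem_image.mpr fun P hP ↦ ?_)
    (Finset.forall_mem_image.mpr fun P hP ↦ Finset.forall_mem_image.mpr fun Q hQ ↦ hH P hP Q hQ)
    (hLH.trans_le (by exact_mod_cast hLv)) (Finset.forall_mem_image.mpr fun P hP ↦ ?_)
  · obtain ⟨h, rfl, -⟩ := hs P hP
    constructor <;> linarith [h.le_fst, h.fst_le, h.le_snd, h.snd_le]
  · obtain ⟨-, rfl, hm⟩ := hs P hP
    exact hm

theorem exists_card_le_of_isAdmissibleAt : ∃ C : ℝ, 0 < C ∧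
    ∀ {L H K : ℤ} {s : Finset (ℤ × ℤ)}, 1 ≤ L → 0 < H → 0 < K → C * H ^ 20 < L →
      (∀ P ∈ s, IsAdmissibleAt L P ∧ ∃ k m, 0 < k ∧ k ≤ K ∧ -formG P.1 P.2 = k * m ^ 2) →
      (s.card : ℤ) ≤ 6 * ((2 * L + 1) * (K * (L / H + 1))) := by
  obtain ⟨C, hC₀, hC⟩ := exists_card_le_six_of_isAdmissibleAt
  refine ⟨C, hC₀, fun {L H K s} hL hH hK hLH hs ↦ ?_⟩
  have hadm P (hP : P ∈ s) := (hs P hP).1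
  choose! _ k m hk₀ hkK hkm using hs
  let box : Finset (ℤ × ℤ × ℤ) :=
    Finset.Icc (42 * L) (44 * L) ×ˢ Finset.Icc 1 K ×ˢ Finset.Icc 0 (L / H)
  let cell (P : ℤ × ℤ) : ℤ × ℤ × ℤ := (P.2, k P, (P.1 - 22 * L) / H)
  have hcell : ∀ P ∈ s, cell P ∈ box := fun P hP ↦ by
    have hPL := hadm P hP
    simp only [cell, box, Finset.mem_product, Finset.mem_Icc]
    exact ⟨⟨hPL.le_snd, hPL.snd_le⟩, ⟨hk₀ P hP, hkK P hP⟩,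
      Int.ediv_nonneg (by linarith [hPL.le_fst]) hH.le,
      Int.ediv_le_ediv hH (by linarith [hPL.fst_le])⟩
  have hfiber : ∀ c ∈ box, (s.filter (cell · = c)).card ≤ 6 := by
    rintro ⟨v, k', q⟩ hc
    simp only [box, Finset.mem_product, Finset.mem_Icc] at hc
    have hmem : ∀ P ∈ s.filter (cell · = (v, k', q)),
        P ∈ s ∧ P.2 = v ∧ k P = k' ∧ (P.1 - 22 * L) / H = q := fun P hP ↦ by
      simpa only [Finset.mem_filter, cell, Prod.mk.injEq] using hP
    refine hC (v := v) hL hc.2.1.1 hLH (fun P hP ↦ ?_) fun P hP Q hQ ↦ ?_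
    · obtain ⟨hPs, hv, rfl, -⟩ := hmem P hP
      exact ⟨hadm P hPs, hv, m P, hkm P hPs⟩
    · rw [← sub_sub_sub_cancel_right P.1 Q.1 (22 * L)]
      exact abs_sub_le_of_ediv_eq_ediv hH ((hmem P hP).2.2.2.trans (hmem Q hQ).2.2.2.symm)
  have hbox : (box.card : ℤ) = (2 * L + 1) * (K * (L / H + 1)) := by
    have hLH₀ : 0 ≤ L / H := Int.ediv_nonneg (by linarith) hH.le
    simp only [box, Finset.card_product, Nat.cast_mul]
    rw [Int.card_Icc_of_le _ _ (by linarith), Int.card_Icc_of_le _ _ (by linarith),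
      Int.card_Icc_of_le _ _ (by linarith)]
    ring
  rw [← hbox]
  exact_mod_cast Finset.card_le_mul_card_image_of_maps_to hcell 6 hfiber

end FewPoints

section SquarefreeKernel

theorem coprime_and_sq_dvd_right {p w g : ℕ} (hp : p.Prime) (hwg : w.Coprime g) (hw₀ : w ≠ 0)
    (hw : w < p ^ 2) (h : p ^ 2 ∣ w * g) : p.Coprime w ∧ p ^ 2 ∣ g := by
  have hpw : p.Coprime w := by
    rw [hp.coprime_iff_not_dvd]
    intro hdvd
    have hpg : (p ^ 2).Coprime g := (hwg.coprime_dvd_left hdvd).pow_left 2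
    exact hw.not_ge (Nat.le_of_dvd (Nat.pos_of_ne_zero hw₀) (hpg.dvd_of_dvd_mul_right h))
  exact ⟨hpw, (hpw.pow_left 2).dvd_of_dvd_mul_left h⟩

variable {w g a b z Y T : ℕ} (hwg : w.Coprime g) (h₀ : w * g ≠ 0) (hab : b ^ 2 * a = w * g)
  (hw : w ≤ Y ^ 2) (hg : g ≤ Y ^ 4) (hY : ∀ p, p.Prime → z < p → p ^ 2 ∣ w * g → Y < p)
  (hT₀ : 0 < T) (hT : ∀ p, p.Prime → p ^ 2 ∣ g → p ≤ T)
include hwg h₀ hab hw hg hY hT₀ hT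

/- Every prime factor of the rough part of `b` exceeds `Y`, hence divides `g` twice; there is no
room in `g` for two of them. -/
theorem roughPart_le : roughPart z b ≤ T := by
  have hb₂ : b ^ 2 ∣ w * g := Dvd.intro _ hab
  have hprime {p : ℕ} (hp : p.Prime) (hpb : p ∣ roughPart z b) :
      Y < p ∧ p.Coprime w ∧ p ^ 2 ∣ g := by
    have hp₂ : p ^ 2 ∣ w * g := (pow_dvd_pow_of_dvd (hpb.trans (roughPart_dvd z b)) 2).trans hb₂
    have hYp : Y < p := hY p hp (lt_of_prime_of_dvd_roughPart hp hpb) hp₂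
    exact ⟨hYp, coprime_and_sq_dvd_right hp hwg (left_ne_zero_of_mul h₀)
      (hw.trans_lt (Nat.pow_lt_pow_left hYp two_ne_zero)) hp₂⟩
  by_cases h₁ : roughPart z b = 1
  · exact h₁ ▸ hT₀
  obtain ⟨p, hp, t, ht⟩ := Nat.exists_prime_and_dvd h₁
  by_cases ht₁ : t = 1
  · rw [ht, ht₁, mul_one]
    exact hT p hp (hprime hp ⟨t, ht⟩).2.2
  obtain ⟨q, hq, hqt⟩ := Nat.exists_prime_and_dvd ht₁
  have hpq : p * q ∣ roughPart z b := ht ▸ mul_dvd_mul_left p hqt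
  obtain ⟨hYp, hpw, -⟩ := hprime hp (dvd_of_mul_right_dvd hpq)
  obtain ⟨hYq, hqw, -⟩ := hprime hq (dvd_of_mul_left_dvd hpq)
  have hpq₂ : (p * q) ^ 2 ∣ g := ((hpw.mul_left hqw).pow_left 2).dvd_of_dvd_mul_left
    ((pow_dvd_pow_of_dvd (hpq.trans (roughPart_dvd z b)) 2).trans hb₂)
  have hle := (Nat.le_of_dvd (Nat.pos_of_ne_zero (right_ne_zero_of_mul h₀)) hpq₂).trans hg
  have hlt : (Y * Y) ^ 2 < (p * q) ^ 2 :=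
    Nat.pow_lt_pow_left (Nat.mul_lt_mul'' hYp hYq) two_ne_zero
  exact absurd (hlt.trans_le hle) (by ring_nf; exact lt_irrefl _)

theorem lt_roughPart {S K : ℕ} (hS : smoothPart z (w * g) ≤ S) (hK : S * T ^ 2 * K < w * g) :
    K < roughPart z a := by
  have hb₀ : b ≠ 0 := fun h ↦ h₀ (by rw [← hab, h, zero_pow two_ne_zero, zero_mul])
  have ha₀ : a ≠ 0 := fun h ↦ h₀ (by rw [← hab, h, mul_zero])
  have hb : roughPart z b ≤ T := roughPart_le hwg h₀ hab hw hg hY hT₀ hT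
  by_contra! hle
  refine hK.not_ge ?_
  calc w * g = smoothPart z (w * g) * roughPart z (b ^ 2 * a) := by
        rw [hab, smoothPart_mul_roughPart h₀]
    _ = smoothPart z (w * g) * (roughPart z b ^ 2 * roughPart z a) := by
        rw [roughPart_mul (pow_ne_zero 2 hb₀) ha₀, sq, roughPart_mul hb₀ hb₀, sq]
    _ ≤ S * (T ^ 2 * K) := by gcongr
    _ = S * T ^ 2 * K := (mul_assoc _ _ _).symm

end SquarefreeKernel

section Multiplicity

variable {s : Finset (ℤ × ℤ)}

theorem card_le_pow_of_prime_dvd_formF {T : Finset ℕ} (hT : ∀ p ∈ T, p.Prime)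
    (hs : ∀ P ∈ s, IsAdmissible P) (hF : ∀ P ∈ s, ∀ p ∈ T, (p : ℤ) ∣ formF P.1 P.2)
    (hcross : ∀ P ∈ s, ∀ Q ∈ s, (∀ p ∈ T, (p : ℤ) ∣ cross P Q) → P = Q) :
    s.card ≤ 8 ^ T.card := calc
  s.card ≤ (T.pi fun p ↦ s.image (ratio p)).card :=
    Finset.card_le_card_of_injOn (fun P p _ ↦ ratio p P)
      (fun _ hP ↦ Finset.mem_pi.mpr fun _ _ ↦ Finset.mem_image_of_mem _ hP)
      fun P hP Q hQ h ↦ hcross P hP Q hQ fun p hp ↦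
        dvd_cross_of_ratio_eq ((hs P hP).isUnit_snd (hF P hP p hp))
          ((hs Q hQ).isUnit_snd (hF Q hQ p hp)) (congr_fun₂ h p hp)
  _ = ∏ p ∈ T, (s.image (ratio p)).card := Finset.card_pi _ _
  _ ≤ 8 ^ T.card := Finset.prod_le_pow_card _ _ _ fun p hp ↦
    card_image_ratio_le (hT p hp).isPrimePow hs fun P hP ↦ hF P hP p hp

theorem card_primeFactors_roughPart_le {a z E : ℕ} (hz : 2 ≤ z) (ha : Squarefree a)
    (hE : a ≤ z ^ E) : (roughPart z a).primeFactors.card ≤ E := by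
  refine (Nat.pow_le_pow_iff_right hz).mp ?_
  calc z ^ (roughPart z a).primeFactors.card ≤ ∏ p ∈ (roughPart z a).primeFactors, p :=
      Finset.pow_card_le_prod _ _ _ fun p hp ↦ (lt_of_prime_of_dvd_roughPart
        (Nat.prime_of_mem_primeFactors hp) (Nat.dvd_of_mem_primeFactors hp)).le
    _ = roughPart z a :=
      Nat.prod_primeFactors_of_squarefree (ha.squarefree_of_dvd (roughPart_dvd z a))
    _ ≤ a := Nat.le_of_dvd (Nat.pos_of_ne_zero ha.ne_zero) (roughPart_dvd z a)
    _ ≤ z ^ E := hE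

/- If `a` divides both `F(P)` and `F(Q)`, then up to the choice of one of at most `8` roots for each
prime factor of the rough part of `a`, that rough part divides the determinant of `P` and `Q`, which
is too small unless it vanishes. -/
theorem card_le_pow_of_dvd_formF {L : ℤ} (hL : 1 ≤ L) {a z E : ℕ} (hz : 2 ≤ z) (ha : Squarefree a)
    (hE : a ≤ z ^ E) (hrough : 1012 * L ^ 2 < roughPart z a) (hs : ∀ P ∈ s, IsAdmissibleAt L P)
    (hF : ∀ P ∈ s, (a : ℤ) ∣ formF P.1 P.2) : s.card ≤ 8 ^ E := by
  have hdvd {p : ℕ} (hp : p ∈ (roughPart z a).primeFactors) : p ∣ a :=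
    (Nat.dvd_of_mem_primeFactors hp).trans (roughPart_dvd z a)
  refine (card_le_pow_of_prime_dvd_formF (fun p hp ↦ Nat.prime_of_mem_primeFactors hp)
    (fun P hP ↦ (hs P hP).toIsAdmissible)
    (fun P hP p hp ↦ (Int.natCast_dvd_natCast.mpr (hdvd hp)).trans (hF P hP))
    fun P hP Q hQ h ↦ ?_).trans
      (Nat.pow_le_pow_right (by norm_num) (card_primeFactors_roughPart_le hz ha hE))
  have hcross : (roughPart z a : ℤ) ∣ cross P Q := by
    rw [Int.natCast_dvd,
      ← Nat.prod_primeFactors_of_squarefree (ha.squarefree_of_dvd (roughPart_dvd z a))]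
    exact Finset.prod_primes_dvd _ (fun p hp ↦ (Nat.prime_of_mem_primeFactors hp).prime)
      fun p hp ↦ Int.natCast_dvd.mp (h p hp)
  exact eq_of_cross_eq_zero (hs P hP).isCoprime (hs Q hQ).isCoprime ((hs P hP).fst_pos hL)
    ((hs Q hQ).fst_pos hL) (Int.eq_zero_of_abs_lt_dvd hcross
      (((hs P hP).abs_cross_le hL (hs Q hQ)).trans_lt hrough))

end Multiplicity

section ExceptionalPoints

variable {L : ℤ} {s : Finset (ℤ × ℤ)}

theorem card_le_of_exists_sq_dvd_formF (hL : 1 ≤ L) (hs : ∀ P ∈ s, IsAdmissibleAt L P) {z Y : ℕ}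
    (hz : 0 < z)
    (hF : ∀ P ∈ s, ∃ p : ℕ, p.Prime ∧ z < p ∧ p ≤ Y ∧ (p : ℤ) ^ 2 ∣ formF P.1 P.2) :
    (s.card : ℝ) ≤ 8 * Y + 16000 * (L : ℝ) ^ 2 / z := by
  let primes : Finset ℕ := (Finset.Ioc z Y).filter Nat.Prime
  have hcover : s ⊆ primes.biUnion fun p ↦ s.filter fun P ↦ (p : ℤ) ^ 2 ∣ formF P.1 P.2 := by
    intro P hP
    obtain ⟨p, hp, hzp, hpY, hdvd⟩ := hF P hP
    simp only [Finset.mem_biUnion, Finset.mem_filter, Finset.mem_Ioc, primes]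
    exact ⟨p, ⟨⟨hzp, hpY⟩, hp⟩, hP, hdvd⟩
  have hcard {p : ℕ} (hp : p.Prime) :
      ((s.filter fun P ↦ (p : ℤ) ^ 2 ∣ formF P.1 P.2).card : ℝ) ≤
        8 + 16000 * (L : ℝ) ^ 2 * ((p : ℝ) ^ 2)⁻¹ := by
    have h := card_le_of_isPrimePow_dvd_formF (n := p ^ 2) hL
      (fun P hP ↦ hs P (Finset.mem_of_mem_filter P hP)) (hp.isPrimePow.pow two_ne_zero)
      fun P hP ↦ by exact_mod_cast (Finset.mem_filter.mp hP).2
    rw [div_eq_mul_inv] at h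
    exact_mod_cast h
  have hinv : ∑ p ∈ Finset.Ioc z Y, ((p : ℝ) ^ 2)⁻¹ ≤ (z : ℝ)⁻¹ := by
    rcases le_total z Y with h | h
    · exact (sum_Ioc_inv_sq_le_sub hz.ne' h).trans (sub_le_self _ (by positivity))
    · rw [Finset.Ioc_eq_empty (by lia), Finset.sum_empty]
      positivity
  calc (s.card : ℝ)
      ≤ ∑ p ∈ primes, ((s.filter fun P ↦ (p : ℤ) ^ 2 ∣ formF P.1 P.2).card : ℝ) := by
        exact_mod_cast (Finset.card_le_card hcover).trans Finset.card_biUnion_le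
    _ ≤ ∑ p ∈ primes, (8 + 16000 * (L : ℝ) ^ 2 * ((p : ℝ) ^ 2)⁻¹) :=
        Finset.sum_le_sum fun p hp ↦ hcard (Finset.mem_filter.mp hp).2
    _ ≤ ∑ p ∈ Finset.Ioc z Y, (8 + 16000 * (L : ℝ) ^ 2 * ((p : ℝ) ^ 2)⁻¹) :=
        Finset.sum_le_sum_of_subset_of_nonneg (Finset.filter_subset _ _)
          fun _ _ _ ↦ by positivity
    _ = (Y - z : ℕ) * 8 + 16000 * (L : ℝ) ^ 2 * ∑ p ∈ Finset.Ioc z Y, ((p : ℝ) ^ 2)⁻¹ := by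
        rw [Finset.sum_add_distrib, ← Finset.mul_sum, Finset.sum_const, Nat.card_Ioc, nsmul_eq_mul]
    _ ≤ Y * 8 + 16000 * (L : ℝ) ^ 2 * (z : ℝ)⁻¹ := by
        gcongr
        exact Nat.sub_le Y z
    _ = 8 * Y + 16000 * (L : ℝ) ^ 2 / z := by ring

theorem card_mul_log_le_of_le_smoothPart (hL : 1 ≤ L) (hs : ∀ P ∈ s, IsAdmissibleAt L P)
    {z S J : ℕ} (hz : 0 < z) (hS : 0 < S) (hJ : 10 ^ 22 * L ^ 8 < 2 ^ J)
    (hF : ∀ P ∈ s, S ≤ smoothPart z (formF P.1 P.2).natAbs) :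
    s.card * Real.log S ≤
      8 * J * (Real.log 4 * z) + 32000 * (L : ℝ) ^ 2 * (Real.log z + Real.log 4) := calc
  s.card * Real.log S = ∑ _P ∈ s, Real.log S := by rw [Finset.sum_const, nsmul_eq_mul]
  _ ≤ ∑ P ∈ s, Real.log (smoothPart z (formF P.1 P.2).natAbs) := by
      refine Finset.sum_le_sum fun P hP ↦ Real.log_le_log (by exact_mod_cast hS) ?_
      exact_mod_cast hF P hP
  _ ≤ 8 * J * (Real.log 4 * z) + 2 * (16000 * (L : ℝ) ^ 2) * (Real.log z + Real.log 4) := by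
      refine sum_log_smoothPart_le (fun P hP ↦ Int.natAbs_ne_zero.mpr ((hs P hP).formF_neg hL).ne)
        (fun P hP ↦ ?_) (by norm_num) (by positivity) hz fun p j hp hj ↦ ?_
      · have hlt := ((hs P hP).neg_formF_bounds hL).2.trans_lt hJ
        zify
        rwa [abs_of_neg ((hs P hP).formF_neg hL)]
      · exact_mod_cast card_le_of_isPrimePow_dvd_formF hL
          (fun P hP ↦ hs P (Finset.mem_of_mem_filter P hP)) (hp.isPrimePow.pow hj.ne')
          fun P hP ↦ Int.natCast_dvd.mpr (Finset.mem_filter.mp hP).2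
  _ = _ := by ring

theorem card_mul_le_of_sq_le_smoothPart (hL : 1 ≤ L) (hs : ∀ P ∈ s, IsAdmissibleAt L P)
    {i j E : ℕ} (hi : 0 < i) (hE : 10 ^ 22 * L ^ 8 < (2 ^ i) ^ E)
    (hF : ∀ P ∈ s, ((2 ^ i) ^ j) ^ 2 ≤ smoothPart (2 ^ i) (formF P.1 P.2).natAbs) :
    (s.card : ℝ) * j ≤ 8 * E * 2 ^ i + 48000 * (L : ℝ) ^ 2 := by
  have h := card_mul_log_le_of_le_smoothPart hL hs (J := i * E) (by positivity) (by positivity)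
    (pow_mul (2 : ℤ) i E ▸ hE) hF
  have hlog : Real.log 4 = 2 * Real.log 2 := by
    rw [show (4 : ℝ) = 2 ^ 2 by norm_num, Real.log_pow, Nat.cast_two]
  simp only [Nat.cast_pow, Nat.cast_ofNat, Nat.cast_mul, Real.log_pow, hlog] at h
  have hi₁ : (1 : ℝ) ≤ i := by exact_mod_cast hi
  refine le_of_mul_le_mul_right ?_
    (by positivity : 0 < 2 * i * Real.log 2)
  calc s.card * j * (2 * i * Real.log 2) = s.card * (2 * (j * (i * Real.log 2))) := by ring
    _ ≤ 8 * (i * E) * (2 * Real.log 2 * 2 ^ i) +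
          32000 * (L : ℝ) ^ 2 * (i * Real.log 2 + 2 * Real.log 2) := h
    _ ≤ 8 * (i * E) * (2 * Real.log 2 * 2 ^ i) +
          32000 * (L : ℝ) ^ 2 * (i * Real.log 2 + 2 * i * Real.log 2) := by
        gcongr
        linarith
    _ = (8 * E * 2 ^ i + 48000 * (L : ℝ) ^ 2) * (2 * i * Real.log 2) := by ring

theorem IsAdmissibleAt.exists_neg_formG_eq_mul_sq (hL : 1 ≤ L) {P : ℤ × ℤ}
    (hP : IsAdmissibleAt L P) {T : ℕ} {K : ℤ} (hTK : 10 ^ 18 * L ^ 6 ≤ K * (T : ℤ) ^ 2)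
    (hT : 0 < T) (hG : ∃ p : ℕ, T < p ∧ (p : ℤ) ^ 2 ∣ formG P.1 P.2) :
    ∃ k m, 0 < k ∧ k ≤ K ∧ -formG P.1 P.2 = k * m ^ 2 := by
  obtain ⟨p, hp, k, hk⟩ := hG
  obtain ⟨hG₀, hG₁⟩ := hP.neg_formG_bounds hL
  have hkp : -formG P.1 P.2 = -k * (p : ℤ) ^ 2 := by rw [hk]; ring
  have hk₀ : 0 < -k := by
    refine pos_of_mul_pos_left (b := (p : ℤ) ^ 2) (hkp ▸ hG₀.trans_lt' ?_) (by positivity)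
    positivity
  refine ⟨-k, p, hk₀, le_of_mul_le_mul_right (a := (T : ℤ) ^ 2) ?_ (by positivity), hkp⟩
  calc -k * (T : ℤ) ^ 2 ≤ -k * (p : ℤ) ^ 2 := by gcongr
    _ ≤ K * (T : ℤ) ^ 2 := (hkp ▸ hG₁).trans hTK

theorem exists_card_mul_le_of_sq_dvd_formG : ∃ C : ℝ, ∀ {M B : ℕ} {s : Finset (ℤ × ℤ)},
    0 < M → 0 < B → C < B → (∀ P ∈ s, IsAdmissibleAt (M * B ^ 101) P) →
    (∀ P ∈ s, ∃ p : ℕ, B ^ 301 < p ∧ (p : ℤ) ^ 2 ∣ formG P.1 P.2) →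
    s.card * B ≤ 36 * 10 ^ 18 * M ^ 8 * B ^ 202 := by
  obtain ⟨C, -, hC⟩ := exists_card_le_of_isAdmissibleAt
  refine ⟨C, fun {M B s} hM hB hCB hs hG ↦ ?_⟩
  have hL : 1 ≤ (M : ℤ) * B ^ 101 := by exact_mod_cast Nat.mul_pos hM (pow_pos hB 101)
  have hcard := hC (H := B ^ 5) (K := 10 ^ 18 * M ^ 6 * B ^ 4) (s := s) hL (by positivity)
    (by positivity) ?_ fun P hP ↦ ⟨hs P hP, ?_⟩
  · have hdiv : (M * B ^ 101 : ℤ) / B ^ 5 = M * B ^ 96 :=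
      Int.ediv_eq_of_eq_mul_left (by positivity) (by ring)
    rw [hdiv] at hcard
    norm_cast at hcard
    have h₁ : 1 ≤ M * B ^ 101 := Nat.mul_pos hM (pow_pos hB 101)
    have h₂ : 1 ≤ M * B ^ 96 := Nat.mul_pos hM (pow_pos hB 96)
    calc s.card * B
        ≤ 6 * ((2 * (M * B ^ 101) + 1) * (10 ^ 18 * M ^ 6 * B ^ 4 * (M * B ^ 96 + 1))) * B :=
          Nat.mul_le_mul_right B hcard
      _ ≤ 6 * ((2 * (M * B ^ 101) + M * B ^ 101) *
            (10 ^ 18 * M ^ 6 * B ^ 4 * (M * B ^ 96 + M * B ^ 96))) * B := by gcongr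
      _ = 36 * 10 ^ 18 * M ^ 8 * B ^ 202 := by ring
  · push_cast
    calc C * ((B : ℝ) ^ 5) ^ 20 < B * ((B : ℝ) ^ 5) ^ 20 := by gcongr
      _ = 1 * (B : ℝ) ^ 101 := by ring
      _ ≤ M * (B : ℝ) ^ 101 := by
          gcongr
          exact_mod_cast hM
  · exact (hs P hP).exists_neg_formG_eq_mul_sq hL (T := B ^ 301) (Eq.le (by push_cast; ring))
      (by positivity) (hG P hP)

end ExceptionalPoints

section RoughKernel

/-- The squarefree kernel `a` of `-F(P)` has a `z`-rough part exceeding every determinant of two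
admissible points at scale `L`. -/
def HasRoughKernel (L : ℤ) (z : ℕ) (P : ℤ × ℤ) : Prop :=
  ∃ (a : ℕ) (b : ℤ), Squarefree a ∧ formF P.1 P.2 = -a * b ^ 2 ∧ 1012 * L ^ 2 < roughPart z a

variable {L : ℤ} {s : Finset (ℤ × ℤ)} {z : ℕ}

theorem IsAdmissibleAt.hasRoughKernel (hL : 1 ≤ L) {P : ℤ × ℤ} (hP : IsAdmissibleAt L P)
    {Y T S : ℕ} (hT₀ : 0 < T) (hY₂ : 10 ^ 4 * L ^ 2 ≤ (Y : ℤ) ^ 2)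
    (hY₄ : 10 ^ 18 * L ^ 6 ≤ (Y : ℤ) ^ 4) (hST : S * (T : ℤ) ^ 2 * (1012 * L ^ 2) < L ^ 8)
    (hF : ∀ p : ℕ, p.Prime → z < p → (p : ℤ) ^ 2 ∣ formF P.1 P.2 → Y < p)
    (hS : smoothPart z (formF P.1 P.2).natAbs ≤ S)
    (hG : ∀ p : ℕ, p.Prime → (p : ℤ) ^ 2 ∣ formG P.1 P.2 → p ≤ T) : HasRoughKernel L z P := by
  obtain ⟨a, b, hab, ha⟩ := Nat.sq_mul_squarefree (formF P.1 P.2).natAbs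
  lift L to ℕ using zero_le_one.trans hL
  obtain ⟨hF₀, -⟩ := hP.neg_formF_bounds hL
  obtain ⟨hG₀, hG₁⟩ := hP.neg_formG_bounds hL
  obtain ⟨hW₀, hW₁⟩ := hP.formW_bounds hL
  have hFabs : |formF P.1 P.2| = -formF P.1 P.2 := abs_of_neg (hP.formF_neg hL)
  have hGabs : |formG P.1 P.2| = -formG P.1 P.2 :=
    abs_of_nonpos (neg_nonneg.mp ((by positivity : 0 ≤ (L : ℤ) ^ 6).trans hG₀))
  have hWabs : |formW P.1 P.2| = formW P.1 P.2 :=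
    abs_of_nonneg ((by positivity : 0 ≤ (L : ℤ) ^ 2).trans hW₀)
  have hWG : (formF P.1 P.2).natAbs = (formW P.1 P.2).natAbs * (formG P.1 P.2).natAbs :=
    Int.natAbs_mul _ _
  have hdvd {p : ℕ} {x : ℤ} (h : p ^ 2 ∣ x.natAbs) : (p : ℤ) ^ 2 ∣ x := by
    exact_mod_cast Int.natCast_dvd.mpr h
  refine ⟨a, b, ha, ?_, ?_⟩
  · have h : (b : ℤ) ^ 2 * a = -formF P.1 P.2 := by
      rw [← hFabs, Int.abs_eq_natAbs, ← hab]
      push_cast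
      rfl
    linear_combination h
  · have hrough := lt_roughPart (z := z) (a := a) (b := b) (Y := Y) (K := 1012 * L ^ 2)
      (Int.isCoprime_iff_gcd_eq_one.mp hP.isCoprime_formW_formG)
      (hWG ▸ Int.natAbs_ne_zero.mpr (hP.formF_neg hL).ne) (hab.trans hWG)
      (by zify; exact hWabs.trans_le (hW₁.trans hY₂))
      (by zify; exact hGabs.trans_le (hG₁.trans hY₄))
      (fun p hp hzp h ↦ hF p hp hzp (hdvd (hWG ▸ h))) hT₀ (fun p hp h ↦ hG p hp (hdvd h))
      (hWG ▸ hS) (by rw [← hWG]; zify; exact hST.trans_le (hF₀.trans_eq hFabs.symm))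
    exact_mod_cast hrough

end RoughKernel

open Filter Finset

section Scale

variable {M B z : ℕ} (hM : 0 < M) (hz : 10 ^ 22 * M ^ 8 < z) (hB : z ≤ B)
include hM hz hB

theorem IsAdmissibleAt.hasRoughKernel_of_scale {P : ℤ × ℤ} (hP : IsAdmissibleAt (M * B ^ 101) P)
    (hF : ∀ p : ℕ, p.Prime → z < p → (p : ℤ) ^ 2 ∣ formF P.1 P.2 → B ^ 201 < p)
    (hS : smoothPart z (formF P.1 P.2).natAbs ≤ B ^ 2)
    (hG : ∀ p : ℕ, p.Prime → (p : ℤ) ^ 2 ∣ formG P.1 P.2 → p ≤ B ^ 301) :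
    HasRoughKernel (M * B ^ 101) z P := by
  have hB₀ : 0 < B := by lia
  have hM₆ : M ^ 6 ≤ M ^ 8 := Nat.pow_le_pow_right hM (by norm_num)
  have hM₂ : M ^ 2 ≤ M ^ 8 := Nat.pow_le_pow_right hM (by norm_num)
  refine hP.hasRoughKernel (by exact_mod_cast Nat.mul_pos hM (pow_pos hB₀ 101))
    (pow_pos hB₀ 301) ?_ ?_ ?_ hF hS hG
  · norm_cast
    calc 10 ^ 4 * (M * B ^ 101) ^ 2 = 10 ^ 4 * M ^ 2 * B ^ 202 := by ring
      _ ≤ B * B ^ 202 := Nat.mul_le_mul_right _ (by lia)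
      _ ≤ B ^ 200 * B ^ 202 := Nat.mul_le_mul_right _ (Nat.le_self_pow (by norm_num) B)
      _ = (B ^ 201) ^ 2 := by ring
  · norm_cast
    calc 10 ^ 18 * (M * B ^ 101) ^ 6 = 10 ^ 18 * M ^ 6 * B ^ 606 := by ring
      _ ≤ B * B ^ 606 := Nat.mul_le_mul_right _ (by lia)
      _ ≤ B ^ 198 * B ^ 606 := Nat.mul_le_mul_right _ (Nat.le_self_pow (by norm_num) B)
      _ = (B ^ 201) ^ 4 := by ring
  · norm_cast
    calc B ^ 2 * (B ^ 301) ^ 2 * (1012 * (M * B ^ 101) ^ 2) = 1012 * (M ^ 2 * B ^ 806) := by ring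
      _ < B ^ 2 * (M ^ 2 * B ^ 806) := by
          gcongr
          nlinarith
      _ ≤ B ^ 2 * (M ^ 8 * B ^ 806) := by gcongr
      _ = (M * B ^ 101) ^ 8 := by ring

open Classical in
theorem card_le_card_hasRoughKernel_add {s : Finset (ℤ × ℤ)}
    (hs : ∀ P ∈ s, IsAdmissibleAt (M * B ^ 101) P) :
    #s ≤ #{P ∈ s | HasRoughKernel (M * B ^ 101) z P} +
      (#{P ∈ s | ∃ p : ℕ, p.Prime ∧ z < p ∧ p ≤ B ^ 201 ∧ (p : ℤ) ^ 2 ∣ formF P.1 P.2} +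
        (#{P ∈ s | B ^ 2 ≤ smoothPart z (formF P.1 P.2).natAbs} +
          #{P ∈ s | ∃ p : ℕ, B ^ 301 < p ∧ (p : ℤ) ^ 2 ∣ formG P.1 P.2})) := by
  refine (card_le_card fun P hP ↦ ?_).trans <| (card_union_le _ _).trans <|
    Nat.add_le_add_left ((card_union_le _ _).trans <|
      Nat.add_le_add_left (card_union_le _ _) _) _
  simp only [mem_union, mem_filter, hP, true_and]
  by_contra! h
  obtain ⟨hrough, hF, hS, hG⟩ := h
  exact hrough ((hs P hP).hasRoughKernel_of_scale hM hz hB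
    (fun p hp hzp hdvd ↦ lt_of_not_ge fun hpB ↦ hF p hp hzp hpB hdvd) hS.le
    fun p _ hdvd ↦ le_of_not_gt fun hBp ↦ hG p hBp hdvd)

omit hM hB in
theorem mul_pow_lt_pow_of_scale (j : ℕ) :
    10 ^ 22 * (M * (z ^ j) ^ 101) ^ 8 < z ^ (808 * j + 1) := calc
  10 ^ 22 * (M * (z ^ j) ^ 101) ^ 8 = 10 ^ 22 * M ^ 8 * z ^ (808 * j) := by ring
  _ < z * z ^ (808 * j) := by
      gcongr
      exact Nat.pow_pos (by lia)
  _ = z ^ (808 * j + 1) := (pow_succ' z _).symm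

theorem card_le_of_exists_sq_dvd_formF_of_scale {s : Finset (ℤ × ℤ)}
    (hs : ∀ P ∈ s, IsAdmissibleAt (M * B ^ 101) P)
    (hF : ∀ P ∈ s, ∃ p : ℕ, p.Prime ∧ z < p ∧ p ≤ B ^ 201 ∧ (p : ℤ) ^ 2 ∣ formF P.1 P.2) :
    (#s : ℝ) ≤ 1 / 20 * (B : ℝ) ^ 202 := by
  have hz₀ : 0 < z := by lia
  have hM₂ : M ^ 2 ≤ M ^ 8 := Nat.pow_le_pow_right hM (by norm_num)
  have hM₈ : 1 ≤ M ^ 8 := Nat.pow_pos hM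
  have hMz : (16000 * 40 * M ^ 2 : ℝ) ≤ z := by exact_mod_cast (by lia : 16000 * 40 * M ^ 2 ≤ z)
  have hB₁ : (320 : ℝ) ≤ B := by exact_mod_cast (by lia : 320 ≤ B)
  calc (#s : ℝ) ≤ 8 * (B ^ 201 : ℕ) + 16000 * (M * B ^ 101 : ℤ) ^ 2 / z :=
        card_le_of_exists_sq_dvd_formF
          (by exact_mod_cast Nat.mul_pos hM (Nat.pow_pos (hz₀.trans_le hB))) hs hz₀ hF
    _ = 1 / 40 * (320 * (B : ℝ) ^ 201) + 1 / 40 * (16000 * 40 * M ^ 2 * B ^ 202 / z) := by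
        push_cast
        ring
    _ ≤ 1 / 40 * (B * (B : ℝ) ^ 201) + 1 / 40 * (z * B ^ 202 / z) := by gcongr
    _ = 1 / 20 * (B : ℝ) ^ 202 := by
        have : (z : ℝ) ≠ 0 := by exact_mod_cast hz₀.ne'
        field_simp
        norm_num

omit hB hz in
theorem card_le_of_sq_le_smoothPart_of_scale {i j : ℕ} (hi : 0 < i) (hj : 960000 * M ^ 2 = j)
    (hMi : 10 ^ 22 * M ^ 8 < 2 ^ i) (hB : B = (2 ^ i) ^ j) {s : Finset (ℤ × ℤ)}
    (hs : ∀ P ∈ s, IsAdmissibleAt (M * B ^ 101) P)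
    (hF : ∀ P ∈ s, B ^ 2 ≤ smoothPart (2 ^ i) (formF P.1 P.2).natAbs) :
    (#s : ℝ) ≤ 1 / 10 * (B : ℝ) ^ 202 := by
  have hM₈ : 1 ≤ M ^ 8 := Nat.pow_pos hM
  have hj₀ : 1 ≤ j := hj ▸ Nat.mul_pos (by norm_num) (Nat.pow_pos hM)
  have hj₁ : (1 : ℝ) ≤ j := by exact_mod_cast hj₀
  have hx : (129440 : ℝ) ≤ 2 ^ i := by exact_mod_cast (by lia : 129440 ≤ 2 ^ i)
  have hBx : (2 : ℝ) ^ i ≤ B := by exact_mod_cast hB ▸ Nat.le_self_pow (Nat.ne_of_gt hj₀) (2 ^ i)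
  have hB₀ : 0 < B := hB ▸ Nat.pow_pos (Nat.two_pow_pos i)
  have hcard := card_mul_le_of_sq_le_smoothPart
    (by exact_mod_cast Nat.mul_pos hM (Nat.pow_pos hB₀)) hs hi
    (by exact_mod_cast hB ▸ mul_pow_lt_pow_of_scale hMi j) fun P hP ↦ hB ▸ hF P hP
  refine le_of_mul_le_mul_right (hcard.trans ?_) (by positivity : (0 : ℝ) < j)
  push_cast
  calc 8 * (808 * j + 1) * (2 : ℝ) ^ i + 48000 * (M * (B : ℝ) ^ 101) ^ 2
      = 8 * (808 * j + 1) * 2 ^ i + 1 / 20 * (960000 * M ^ 2 : ℕ) * (B : ℝ) ^ 202 := by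
        push_cast
        ring
    _ ≤ 8 * (808 * j + j) * 2 ^ i + 1 / 20 * j * (B : ℝ) ^ 202 := by
        rw [hj]
        gcongr
    _ = 1 / 20 * j * (129440 * 2 ^ i) + 1 / 20 * j * (B : ℝ) ^ 202 := by ring
    _ ≤ 1 / 20 * j * B ^ 202 + 1 / 20 * j * (B : ℝ) ^ 202 := by
        gcongr
        calc 129440 * (2 : ℝ) ^ i ≤ B * B := by gcongr; exact hx.trans hBx
          _ = (B : ℝ) ^ 2 := (sq _).symm
          _ ≤ (B : ℝ) ^ 202 := pow_le_pow_right₀ (by linarith) (by norm_num)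
    _ = 1 / 10 * (B : ℝ) ^ 202 * j := by ring

end Scale

theorem exists_card_le_of_sq_dvd_formG_of_scale : ∃ C : ℝ, ∀ {M B z : ℕ} {s : Finset (ℤ × ℤ)},
    0 < M → 10 ^ 22 * M ^ 8 < z → z ≤ B → C < B → (∀ P ∈ s, IsAdmissibleAt (M * B ^ 101) P) →
    (∀ P ∈ s, ∃ p : ℕ, B ^ 301 < p ∧ (p : ℤ) ^ 2 ∣ formG P.1 P.2) →
    (#s : ℝ) ≤ 1 / 20 * (B : ℝ) ^ 202 := by
  obtain ⟨C, hC⟩ := exists_card_mul_le_of_sq_dvd_formG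
  refine ⟨C, fun {M B z s} hM hz hzB hCB hs hG ↦ ?_⟩
  have hMB : (10 ^ 22 * M ^ 8 : ℝ) ≤ B := by exact_mod_cast (hz.trans_le hzB).le
  have hB : 0 < B := (Nat.zero_le _).trans_lt (hz.trans_le hzB)
  have hcard : (#s * B : ℝ) ≤ 36 * 10 ^ 18 * M ^ 8 * B ^ 202 := by
    exact_mod_cast hC hM hB hCB hs hG
  refine le_of_mul_le_mul_right (hcard.trans ?_) (by positivity : (0 : ℝ) < B)
  calc (36 * 10 ^ 18 * M ^ 8 * B ^ 202 : ℝ)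
      = 1 / 20 * (B : ℝ) ^ 202 * (36 * 20 * 10 ^ 18 * M ^ 8) := by ring
    _ ≤ 1 / 20 * (B : ℝ) ^ 202 * (10 ^ 22 * M ^ 8) := by
        gcongr
        norm_num
    _ ≤ 1 / 20 * (B : ℝ) ^ 202 * B := by gcongr

/- The scale is `L = badModulus * B ^ 101`, so that the box has about `B ^ 202` points; those with
`p ^ 2 ∣ F` for some prime `2 ^ i < p ≤ B ^ 201`, with a smooth part exceeding `B ^ 2`, or with
`p ^ 2 ∣ G` for some `p > B ^ 301` make up at most half of them. -/
theorem exists_card_hasRoughKernel_ge : ∃ j : ℕ, 0 < j ∧ ∀ᶠ i : ℕ in atTop, ∀ B : ℕ,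
    B = (2 ^ i) ^ j → ∃ s : Finset (ℤ × ℤ),
      (∀ P ∈ s, IsAdmissibleAt (badModulus * B ^ 101) P ∧
        HasRoughKernel (badModulus * B ^ 101) (2 ^ i) P) ∧ 1 / 5 * (B : ℝ) ^ 202 ≤ #s := by
  classical
  obtain ⟨C, hC⟩ := exists_card_le_of_sq_dvd_formG_of_scale
  have hM : 0 < badModulus := by exact_mod_cast badModulus_pos
  have htop : Tendsto (fun i : ℕ ↦ (2 : ℝ) ^ i) atTop atTop :=
    tendsto_pow_atTop_atTop_of_one_lt one_lt_two
  obtain ⟨j, hj⟩ : ∃ j, 960000 * badModulus ^ 2 = j := ⟨_, rfl⟩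
  have hj₀ : 0 < j := hj ▸ Nat.mul_pos (by norm_num) (Nat.pow_pos hM)
  refine ⟨j, hj₀, ?_⟩
  filter_upwards [htop.eventually_gt_atTop C,
    htop.eventually_gt_atTop (10 ^ 22 * badModulus ^ 8), eventually_gt_atTop 0]
    with i hCi hMi hi B hB
  norm_cast at hMi
  have hzB : 2 ^ i ≤ B := hB ▸ Nat.le_self_pow hj₀.ne' _
  have hB₁ : 1380 ≤ B :=
    ((by norm_num : 1380 ≤ 10 ^ 22).trans (Nat.le_mul_of_pos_right _ (Nat.pow_pos hM))).trans
      (hMi.le.trans hzB)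
  have hCB : C < B := hCi.trans_le (by exact_mod_cast hzB)
  let N := B ^ 101
  have hs P (hP : P ∈ admissibleBox N) : IsAdmissibleAt (badModulus * B ^ 101) P := by
    exact_mod_cast isAdmissibleAt_of_mem_admissibleBox hP
  have hs' {p : ℤ × ℤ → Prop} [DecidablePred p] P (hP : P ∈ (admissibleBox N).filter p) :
      IsAdmissibleAt (badModulus * B ^ 101) P := hs P (mem_of_mem_filter P hP)
  have hbox : 2 / 5 * (B : ℝ) ^ 202 ≤ #(admissibleBox N) := by
    have h := le_card_admissibleBox (N := N) (hB₁.trans (Nat.le_self_pow (by norm_num) B))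
    rwa [Nat.cast_pow, ← pow_mul] at h
  have hsum := card_le_card_hasRoughKernel_add hM hMi hzB hs
  have hF := card_le_of_exists_sq_dvd_formF_of_scale hM hMi hzB hs'
    fun P hP ↦ (mem_filter.mp hP).2
  have hS := card_le_of_sq_le_smoothPart_of_scale hM hi hj hMi hB hs'
    fun P hP ↦ (mem_filter.mp hP).2
  have hG := hC hM hMi hzB hCB hs' fun P hP ↦ (mem_filter.mp hP).2
  refine ⟨_, fun P hP ↦ ⟨hs P (mem_of_mem_filter P hP), (mem_filter.mp hP).2⟩, ?_⟩
  have hsum' := (Nat.cast_le (α := ℝ)).mpr hsum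
  push_cast at hsum'
  linarith

theorem finite_setOf_goodRank7sq (X : ℝ) : {d : ℤ | GoodRank7sq X d}.Finite := by
  refine (Set.finite_Icc (-⌈X⌉) 0).subset ?_
  rintro d ⟨hd, hsq, h⟩
  have hd' : ¬IsSquare d := fun h ↦ hd.not_ge h.nonneg
  obtain ⟨K, _, _, ⟨x, hx⟩, hK⟩ := exists_quadratic_numberField hd'
  have hdX : ((|d| : ℤ) : ℝ) ≤ X :=
    (Int.cast_le.mpr (abs_discr_bounds hd' hsq hx hK).1).trans
      (by exact_mod_cast (h K ⟨x, hx⟩ hK).1)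
  exact ⟨(abs_le.mp (Int.cast_le.mp (hdX.trans (Int.le_ceil X)))).1, hd.le⟩

theorem monotone_ncard_goodRank7sq :
    Monotone fun X : ℝ ↦ ({d : ℤ | GoodRank7sq X d}.ncard : ℝ) := fun X Y hXY ↦ by
  refine Nat.cast_le.mpr (Set.ncard_le_ncard ?_ (finite_setOf_goodRank7sq Y))
  exact fun d ⟨hd, hsq, h⟩ ↦ ⟨hd, hsq, fun K _ _ hx hK ↦
    ⟨(h K hx hK).1.trans hXY, (h K hx hK).2⟩⟩

section Counting

variable {L : ℤ} {z : ℕ} {X : ℝ}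

theorem IsAdmissibleAt.le_of_dvd_formF (hL : 1 ≤ L) {P : ℤ × ℤ} (hP : IsAdmissibleAt L P) {a : ℤ}
    (ha : a ∣ formF P.1 P.2) : a ≤ 10 ^ 22 * L ^ 8 :=
  (Int.le_of_dvd (neg_pos.mpr (hP.formF_neg hL)) (dvd_neg.mpr ha)).trans
    (hP.neg_formF_bounds hL).2

theorem IsAdmissibleAt.goodRank7sq (hL : 1 ≤ L) {P : ℤ × ℤ} (hP : IsAdmissibleAt L P)
    {a : ℕ} {b : ℤ} (ha : Squarefree a) (hF : formF P.1 P.2 = -a * b ^ 2)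
    (hrough : 1012 * L ^ 2 < roughPart z a) (hX : 4 * 10 ^ 22 * (L : ℝ) ^ 8 ≤ X) :
    GoodRank7sq X (-a) := by
  have ha₄ : (-a : ℤ) < -4 := by
    have h : (roughPart z a : ℤ) ≤ a := by
      exact_mod_cast Nat.le_of_dvd (Nat.pos_of_ne_zero ha.ne_zero) (roughPart_dvd z a)
    nlinarith
  have hsq : Squarefree (-a : ℤ) := by
    rwa [← Int.squarefree_natAbs, Int.natAbs_neg, Int.natAbs_natCast]
  refine ⟨by lia, hsq, fun K _ _ ⟨x, hx⟩ hK ↦ ⟨?_, ?_⟩⟩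
  · have hd : ¬IsSquare (-a : ℤ) := fun h ↦ (by lia : (-a : ℤ) < 0).not_ge h.nonneg
    have haF := hP.le_of_dvd_formF hL (hF ▸ (dvd_neg.mpr dvd_rfl).mul_right (b ^ 2))
    have hdiscr : |discr K| ≤ 4 * 10 ^ 22 * L ^ 8 := by
      have h := (abs_discr_bounds hd hsq hx hK).2
      rw [abs_neg, Nat.abs_cast] at h
      linarith
    exact le_trans (by exact_mod_cast hdiscr) hX
  · exact hP.toIsAdmissible.exists_injective_hom_classGroup ha₄ hsq hx hK hF

theorem card_le_mul_ncard_goodRank7sq (hL : 1 ≤ L) {s : Finset (ℤ × ℤ)}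
    (hs : ∀ P ∈ s, IsAdmissibleAt L P ∧ HasRoughKernel L z P) (hz : 2 ≤ z) {E : ℕ}
    (hE : 10 ^ 22 * L ^ 8 ≤ (z : ℤ) ^ E) (hX : 4 * 10 ^ 22 * (L : ℝ) ^ 8 ≤ X) :
    #s ≤ 8 ^ E * {d : ℤ | GoodRank7sq X d}.ncard := by
  have hs₁ P (hP : P ∈ s) := (hs P hP).1
  have haF {a : ℕ} {b F : ℤ} (h : F = -a * b ^ 2) : (a : ℤ) ∣ F :=
    h ▸ (dvd_neg.mpr dvd_rfl).mul_right (b ^ 2)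
  choose! a b ha hF hrough using fun P (hP : P ∈ s) ↦ (hs P hP).2
  rw [Set.ncard_eq_toFinset_card _ (finite_setOf_goodRank7sq X)]
  refine (card_le_mul_card_image_of_maps_to (f := fun P ↦ (-a P : ℤ)) (fun P hP ↦ ?_) (8 ^ E) ?_)
  · exact (Set.Finite.mem_toFinset _).mpr
      ((hs₁ P hP).goodRank7sq hL (ha P hP) (hF P hP) (hrough P hP) hX)
  · intro d _
    obtain hempty | ⟨P, hP⟩ := {P ∈ s | (-a P : ℤ) = d}.eq_empty_or_nonempty
    · simp [hempty]
    · replace ⟨hP, hPd⟩ := mem_filter.mp hP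
      refine card_le_pow_of_dvd_formF hL hz (ha P hP)
        (by exact_mod_cast ((hs₁ P hP).le_of_dvd_formF hL (haF (hF P hP))).trans hE) (hrough P hP)
        (fun Q hQ ↦ hs₁ Q (mem_of_mem_filter Q hQ)) fun Q hQ ↦ ?_
      obtain ⟨hQ, hQP⟩ := mem_filter.mp hQ
      rw [← Int.natCast_inj.mp (neg_injective (hQP.trans hPd.symm))]
      exact haF (hF Q hQ)

end Counting

theorem exists_mul_rpow_le_of_monotone {f : ℝ → ℝ} (hf : Monotone f) {α c δ q : ℝ} (hα : 0 ≤ α)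
    (hc : 0 < c) (hδ : 0 < δ) (hq : 1 < q)
    (h : ∀ᶠ i : ℕ in atTop, δ * (q ^ i) ^ α ≤ f (c * q ^ i)) :
    ∃ c' : ℝ, 0 < c' ∧ ∃ X₀ : ℝ, ∀ X : ℝ, X₀ ≤ X → c' * X ^ α ≤ f X := by
  obtain ⟨i₀, hi₀⟩ := eventually_atTop.mp h
  refine ⟨δ / (c * q) ^ α, by positivity, c * q ^ i₀, fun X hX ↦ ?_⟩
  have hXc : q ^ i₀ ≤ X / c := (le_div_iff₀' hc).mpr hX
  obtain ⟨i, hiX, hXi⟩ := exists_nat_pow_near ((one_le_pow₀ hq.le).trans hXc) hq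
  have hi : i₀ ≤ i := Nat.lt_succ_iff.mp ((pow_lt_pow_iff_right₀ hq).mp (hXc.trans_lt hXi))
  calc δ / (c * q) ^ α * X ^ α ≤ δ / (c * q) ^ α * (c * q * q ^ i) ^ α := by
        have : X ≤ c * q * q ^ i := by
          rw [mul_assoc, ← pow_succ', ← div_le_iff₀' hc]
          exact hXi.le
        have hX₀ : 0 ≤ X := le_trans (by positivity) hX
        gcongr
    _ = δ * (q ^ i) ^ α := by
        rw [Real.mul_rpow (x := c * q) (by positivity) (by positivity), ← mul_assoc,
          div_mul_cancel₀ _ (Real.rpow_pos_of_pos (by positivity) _).ne']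
    _ ≤ f (c * q ^ i) := hi₀ i hi
    _ ≤ f X := hf ((le_div_iff₀' hc).mp hiX)

theorem exists_eventually_rpow_le_ncard_goodRank7sq : ∃ j : ℕ, 0 < j ∧ ∃ δ : ℝ, 0 < δ ∧
    ∀ᶠ i : ℕ in atTop, δ * ((2 ^ (808 * j)) ^ i) ^ ((1 : ℝ) / 4) ≤
      ({d | GoodRank7sq (4 * 10 ^ 22 * badModulus ^ 8 * (2 ^ (808 * j)) ^ i) d}.ncard : ℝ) := by
  obtain ⟨j, hj, hcard⟩ := exists_card_hasRoughKernel_ge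
  have hM : 0 < badModulus := by exact_mod_cast badModulus_pos
  refine ⟨j, hj, 1 / (5 * 8 ^ (808 * j + 1)), by positivity, ?_⟩
  filter_upwards [hcard, eventually_gt_atTop 0,
    (tendsto_pow_atTop_atTop_of_one_lt one_lt_two).eventually_gt_atTop (10 ^ 22 * badModulus ^ 8)]
    with i hcard hi hMi
  obtain ⟨B, hB⟩ : ∃ B : ℕ, B = (2 ^ i) ^ j := ⟨_, rfl⟩
  obtain ⟨s, hs, hsB⟩ := hcard B hB
  have hBq : ((2 : ℝ) ^ (808 * j)) ^ i = (B ^ 202) ^ 4 := by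
    rw [hB]
    push_cast
    ring
  have hroot : (((2 : ℝ) ^ (808 * j)) ^ i) ^ ((1 : ℝ) / 4) = B ^ 202 := by
    rw [hBq, one_div]
    exact_mod_cast Real.pow_rpow_inv_natCast (by positivity : (0 : ℝ) ≤ B ^ 202) four_ne_zero
  have hE : 10 ^ 22 * (badModulus * B ^ 101 : ℤ) ^ 8 ≤ ((2 ^ i : ℕ) : ℤ) ^ (808 * j + 1) := by
    exact_mod_cast hB ▸ (mul_pow_lt_pow_of_scale hMi j).le
  have hX : 4 * 10 ^ 22 * ((badModulus * B ^ 101 : ℤ) : ℝ) ^ 8 ≤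
      4 * 10 ^ 22 * badModulus ^ 8 * (2 ^ (808 * j)) ^ i := by
    rw [hBq]
    push_cast
    exact le_of_eq (by ring)
  have hncard := card_le_mul_ncard_goodRank7sq
    (by exact_mod_cast Nat.mul_pos hM (by rw [hB]; positivity)) hs (Nat.le_self_pow hi.ne' 2) hE hX
  rify at hncard
  rw [hroot, one_div_mul_eq_div, div_le_iff₀ (by positivity)]
  linarith

/-- Byeon: there are `≫ X^(1/4)` imaginary quadratic fields with `|d_k| ≤ X`
whose ideal class group has 7-rank at least 2. -/
theorem count_imag_quad_7rank_two_quarter :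
    ∃ c : ℝ, 0 < c ∧ ∃ X₀ : ℝ, ∀ X : ℝ, X₀ ≤ X →
      c * X ^ ((1 : ℝ) / 4) ≤ ({d : ℤ | GoodRank7sq X d}.ncard : ℝ) := by
  obtain ⟨j, hj, δ, hδ, hcard⟩ := exists_eventually_rpow_le_ncard_goodRank7sq
  have hM : (0 : ℝ) < badModulus := by exact_mod_cast badModulus_pos
  exact exists_mul_rpow_le_of_monotone monotone_ncard_goodRank7sq (by norm_num) (by positivity) hδ
    (one_lt_pow₀ one_lt_two (by positivity)) hcard
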